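/- Let η ∈ ℂ with 2η ∉ Λ. Then the Sklyanin algebra 𝒮_η and the quotient algebra Q_η = T(V)/[R_η] are isomorphic as unital ℂ-algebras. -/

import Mathlib

open Complex

noncomputable section

/-- The Jacobi theta function `θ₁(z|τ)`. -/
def θ (τ z : ℂ) : ℂ :=
  I * ∑' n : ℤ, (-1 : ℂ) ^ n * Complex.exp (Real.pi * I * τ * ((n : ℂ) - 1/2) ^ 2) *
    Complex.exp (Real.pi * I * (2 * (n : ℂ) - 1) * z)

/-- `θ₂(z) = θ(z+1/2)`. -/
def θ2 (τ z : ℂ) : ℂ := θ τ (z + 1/2)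

/-- `θ₃(z) = q^{1/4}exp(iπz)θ(z+(1+τ)/2)`. -/
def θ3 (τ z : ℂ) : ℂ :=
  Complex.exp (Real.pi * I * τ / 4) * Complex.exp (Real.pi * I * z) * θ τ (z + (1 + τ)/2)

/-- `θ₄(z) = θ₃(z+1/2)`. -/
def θ4 (τ z : ℂ) : ℂ := θ3 τ (z + 1/2)

/-- The structure constant `J₂₃`. -/
def J23 (τ η : ℂ) : ℂ := (θ τ η * θ2 τ η / (θ3 τ η * θ4 τ η)) ^ 2

/-- The structure constant `J₃₁`. -/
def J31 (τ η : ℂ) : ℂ := -(θ τ η * θ3 τ η / (θ2 τ η * θ4 τ η)) ^ 2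

/-- The structure constant `J₁₂`. -/
def J12 (τ η : ℂ) : ℂ := (θ τ η * θ4 τ η / (θ2 τ η * θ3 τ η)) ^ 2

/-- The generators `S₀,S₁,S₂,S₃` of the free algebra. -/
def X : Fin 4 → FreeAlgebra ℂ (Fin 4) := FreeAlgebra.ι ℂ

/-- The six Sklyanin relations. -/
def sklRel (τ η : ℂ) (x y : FreeAlgebra ℂ (Fin 4)) : Prop :=
  (x = X 0 * X 1 - X 1 * X 0 ∧ y = (I * J23 τ η) • (X 2 * X 3 + X 3 * X 2)) ∨
  (x = X 0 * X 2 - X 2 * X 0 ∧ y = (I * J31 τ η) • (X 3 * X 1 + X 1 * X 3)) ∨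
  (x = X 0 * X 3 - X 3 * X 0 ∧ y = (I * J12 τ η) • (X 1 * X 2 + X 2 * X 1)) ∨
  (x = X 1 * X 2 - X 2 * X 1 ∧ y = (I : ℂ) • (X 0 * X 3 + X 3 * X 0)) ∨
  (x = X 2 * X 3 - X 3 * X 2 ∧ y = (I : ℂ) • (X 0 * X 1 + X 1 * X 0)) ∨
  (x = X 3 * X 1 - X 1 * X 3 ∧ y = (I : ℂ) • (X 0 * X 2 + X 2 * X 0))

/-- The Sklyanin algebra `𝒮_η`. -/
def Sklyanin (τ η : ℂ) : Type := RingQuot (sklRel τ η)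

instance (τ η : ℂ) : Ring (Sklyanin τ η) := by unfold Sklyanin; infer_instance
instance (τ η : ℂ) : Algebra ℂ (Sklyanin τ η) := by unfold Sklyanin; infer_instance

/-- The space `V` of order-4 theta functions `z ↦ c·∏θ(z+aᵢ)`, `∑aᵢ = 0`. -/
def Vset (τ : ℂ) : Set (ℂ → ℂ) :=
  {g | ∃ (c : ℂ) (a : Fin 4 → ℂ), (∑ i, a i) = 0 ∧
    g = fun z => c * ∏ i, θ τ (z + a i)}

/-- `V` as a submodule of `ℂ → ℂ`. -/
def Vsub (τ : ℂ) : Submodule ℂ (ℂ → ℂ) := Submodule.span ℂ (Vset τ)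

/-- `f(α,β,γ;z) = θ(z+α)θ(z+β)θ(z+γ)θ(z−α−β−γ)`. -/
def fV (τ α β γ : ℂ) : ℂ → ℂ :=
  fun z => θ τ (z + α) * θ τ (z + β) * θ τ (z + γ) * θ τ (z - α - β - γ)

lemma fVmem (τ α β γ : ℂ) : fV τ α β γ ∈ Vsub τ := by
  apply Submodule.subset_span
  refine ⟨1, ![α, β, γ, -α - β - γ], ?_, ?_⟩
  · simp [Fin.sum_univ_four]
  · funext z
    simp only [Fin.prod_univ_four, Matrix.cons_val_zero, Matrix.cons_val_one,
      Matrix.head_cons, Matrix.cons_val_two, Matrix.tail_cons, Matrix.cons_val_three,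
      one_mul]
    have hz : z + (-α - β - γ) = z - α - β - γ := by ring
    rw [hz]
    rfl

/-- `f(α,β,γ;·)` as an element of `V`. -/
def elemV (τ α β γ : ℂ) : ↥(Vsub τ) := ⟨fV τ α β γ, fVmem τ α β γ⟩

/-- The relations generating the two-sided ideal `[R_η]` in the tensor algebra `T(V)`:
the quadratic elements `F_η(a,b,c₁,c₂)` are set to zero. -/
def qRel (τ η : ℂ) (x y : TensorAlgebra ℂ ↥(Vsub τ)) : Prop :=
  ∃ a b c₁ c₂ : ℂ, y = 0 ∧ x =
    TensorAlgebra.ι ℂ (elemV τ (a - η/2) (b - η/2) (c₁ + η/2)) *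
      TensorAlgebra.ι ℂ (elemV τ (a + η/2) (b + η/2) (c₂ - η/2)) -
    TensorAlgebra.ι ℂ (elemV τ (a - η/2) (b - η/2) (c₂ + η/2)) *
      TensorAlgebra.ι ℂ (elemV τ (a + η/2) (b + η/2) (c₁ - η/2))

/-- The quotient algebra `Q_η = T(V)/[R_η]`. -/
def Qeta (τ η : ℂ) : Type := RingQuot (qRel τ η)

instance (τ η : ℂ) : Ring (Qeta τ η) := by unfold Qeta; infer_instance
instance (τ η : ℂ) : Algebra ℂ (Qeta τ η) := by unfold Qeta; infer_instance

/-! ### Jacobi theta functions -/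

/-- The even part of the doubled-period expansion. -/
def thA (τ x : ℂ) : ℂ := jacobiTheta₂ x (2 * τ)

/-- The odd part of the doubled-period expansion. -/
def thB (τ x : ℂ) : ℂ :=
  Complex.exp (Real.pi * I * τ / 2 + Real.pi * I * x) * jacobiTheta₂ (x + τ) (2 * τ)

/-- Pairs of integers, sorted by the parity of their sum. -/
def intPairParity : (ℤ × ℤ) ⊕ (ℤ × ℤ) ≃ ℤ × ℤ where
  toFun := Sum.elim (fun p => (p.1 + p.2, p.1 - p.2)) (fun p => (p.1 + p.2 + 1, p.1 - p.2))
  invFun p := if (p.1 + p.2) % 2 = 0 then Sum.inl ((p.1 + p.2) / 2, (p.1 - p.2) / 2)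
    else Sum.inr ((p.1 + p.2 - 1) / 2, (p.1 - p.2 - 1) / 2)
  left_inv := by
    rintro (⟨k, l⟩ | ⟨k, l⟩)
    · dsimp only [Sum.elim_inl]
      split_ifs with h
      · simp only [Sum.inl.injEq, Prod.mk.injEq]
        omega
      · omega
    · dsimp only [Sum.elim_inr]
      split_ifs with h
      · omega
      · simp only [Sum.inr.injEq, Prod.mk.injEq]
        omega
  right_inv := by
    rintro ⟨m, n⟩
    dsimp only
    split_ifs with h
    · simp only [Sum.elim_inl, Prod.mk.injEq]
      omega
    · simp only [Sum.elim_inr, Prod.mk.injEq]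
      omega

lemma jacobiTheta₂_mul (τ : ℂ) (hτ : 0 < τ.im) (u h : ℂ) :
    jacobiTheta₂ (u + h) τ * jacobiTheta₂ (u - h) τ =
      thA τ (2 * u) * thA τ (2 * h) + thB τ (2 * u) * thB τ (2 * h) := by
  have h2 : 0 < (2 * τ).im := by simpa using hτ
  have hprod : ∀ (x y σ : ℂ), 0 < σ.im → HasSum (fun p : ℤ × ℤ =>
      jacobiTheta₂_term p.1 x σ * jacobiTheta₂_term p.2 y σ)
      (jacobiTheta₂ x σ * jacobiTheta₂ y σ) := by
    intro x y σ hσ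
    have hx := hasSum_jacobiTheta₂_term x hσ
    have hy := hasSum_jacobiTheta₂_term y hσ
    generalize hf : (fun n : ℤ => jacobiTheta₂_term n x σ) = f at hx
    generalize hg : (fun n : ℤ => jacobiTheta₂_term n y σ) = g at hy
    have h := hx.mul hy (summable_mul_of_summable_norm hx.summable.norm hy.summable.norm)
    rw [← hf, ← hg] at h
    exact h
  refine ((intPairParity.hasSum_iff).mpr (hprod (u + h) (u - h) τ hτ)).unique (HasSum.sum ?_ ?_)
  · have e : thA τ (2 * u) * thA τ (2 * h) =
        jacobiTheta₂ (2 * u) (2 * τ) * jacobiTheta₂ (2 * h) (2 * τ) := rfl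
    rw [e]
    convert hprod (2 * u) (2 * h) (2 * τ) h2 using 1
    funext p
    simp only [intPairParity, Function.comp, Equiv.coe_fn_mk, Sum.elim_inl, jacobiTheta₂_term,
      ← Complex.exp_add]
    congr 1
    push_cast
    ring
  · have e : thB τ (2 * u) * thB τ (2 * h) =
        Complex.exp (Real.pi * I * τ / 2 + Real.pi * I * (2 * u)) *
          Complex.exp (Real.pi * I * τ / 2 + Real.pi * I * (2 * h)) *
          (jacobiTheta₂ (2 * u + τ) (2 * τ) * jacobiTheta₂ (2 * h + τ) (2 * τ)) := by
      simp only [thB]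
      ring
    rw [e]
    have e' := (hprod (2 * u + τ) (2 * h + τ) (2 * τ) h2).mul_left
      (Complex.exp (Real.pi * I * τ / 2 + Real.pi * I * (2 * u)) *
          Complex.exp (Real.pi * I * τ / 2 + Real.pi * I * (2 * h)))
    refine Eq.mpr (congrArg (fun F => HasSum F _) (funext fun p => ?_)) e'
    simp only [intPairParity, Function.comp, Equiv.coe_fn_mk, Sum.elim_inr, jacobiTheta₂_term,
      ← Complex.exp_add]
    congr 1
    push_cast
    ring

lemma thA_add_one (τ x : ℂ) : thA τ (x + 1) = thA τ x := jacobiTheta₂_add_left _ _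

lemma thB_add_one (τ x : ℂ) : thB τ (x + 1) = -thB τ x := by
  unfold thB
  rw [show x + 1 + τ = x + τ + 1 by ring, jacobiTheta₂_add_left,
    show Real.pi * I * τ / 2 + Real.pi * I * (x + 1) =
      (Real.pi * I * τ / 2 + Real.pi * I * x) + Real.pi * I by ring, Complex.exp_add _ (Real.pi * I),
    Complex.exp_pi_mul_I]
  ring

lemma thA_sub (τ x : ℂ) :
    thA τ (x - τ) = Complex.exp (Real.pi * I * x - Real.pi * I * τ / 2) * thB τ x := by
  unfold thA thB
  have := jacobiTheta₂_add_left' (x - τ) (2 * τ)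
  rw [show x - τ + 2 * τ = x + τ by ring] at this
  rw [this, ← mul_assoc, ← mul_assoc, ← Complex.exp_add, ← Complex.exp_add]
  ring_nf
  simp

lemma thB_sub (τ x : ℂ) :
    thB τ (x - τ) = Complex.exp (Real.pi * I * x - Real.pi * I * τ / 2) * thA τ x := by
  unfold thA thB
  rw [sub_add_cancel]
  ring_nf

lemma theta_eq_jacobiTheta₂ (τ z : ℂ) : θ τ z =
    I * Complex.exp (Real.pi * I * τ / 4 - Real.pi * I * z) *
      jacobiTheta₂ (z + 1 / 2 - τ / 2) τ := by
  unfold θ jacobiTheta₂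
  rw [mul_assoc I (Complex.exp _),
    ← tsum_mul_left (f := fun n => jacobiTheta₂_term n (z + 1 / 2 - τ / 2) τ)]
  refine congrArg (I * ·) (tsum_congr fun n => ?_)
  have : (-1 : ℂ) ^ n = Complex.exp (Real.pi * I * n) := by
    rw [mul_comm, Complex.exp_int_mul, Complex.exp_pi_mul_I]
  rw [this, jacobiTheta₂_term, ← Complex.exp_add, ← Complex.exp_add, ← Complex.exp_add]
  congr 1
  ring

lemma theta3_eq_jacobiTheta₂ (τ z : ℂ) : θ3 τ z = jacobiTheta₂ z τ := by
  unfold θ3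
  rw [theta_eq_jacobiTheta₂, show z + (1 + τ) / 2 + 1 / 2 - τ / 2 = z + 1 by ring,
    jacobiTheta₂_add_left,
    show Real.pi * I * τ / 4 - Real.pi * I * (z + (1 + τ) / 2) =
      -(Real.pi * I * τ / 4) + (-(Real.pi * I * z)) + (-(Real.pi / 2 * I)) by ring,
    Complex.exp_add, Complex.exp_add, Complex.exp_neg, Complex.exp_neg, Complex.exp_neg,
    Complex.exp_pi_div_two_mul_I]
  field_simp

/-- The factor of automorphy for half-period translations. -/
def thE (τ z : ℂ) : ℂ := Complex.exp (-(Real.pi * I * τ / 4) - Real.pi * I * z)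

lemma thE_ne_zero (τ z : ℂ) : thE τ z ≠ 0 := Complex.exp_ne_zero _

lemma thE_mul (τ u h : ℂ) : thE τ (u + h) * thE τ (u - h) = thE τ u ^ 2 := by
  rw [thE, thE, thE, ← Complex.exp_add, ← Complex.exp_nat_mul]
  congr 1
  push_cast
  ring

section Basic

variable (τ z : ℂ)

lemma theta_add_half : θ τ (z + 1 / 2) = θ2 τ z := rfl

lemma theta3_add_half : θ3 τ (z + 1 / 2) = θ4 τ z := rfl

lemma theta_add_one : θ τ (z + 1) = -θ τ z := by
  rw [theta_eq_jacobiTheta₂, theta_eq_jacobiTheta₂,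
    show z + 1 + 1 / 2 - τ / 2 = z + 1 / 2 - τ / 2 + 1 by ring, jacobiTheta₂_add_left,
    show Real.pi * I * τ / 4 - Real.pi * I * (z + 1) =
      (Real.pi * I * τ / 4 - Real.pi * I * z) + (-(Real.pi * I)) by ring,
    Complex.exp_add _ (-(Real.pi * I)), Complex.exp_neg (Real.pi * I), Complex.exp_pi_mul_I]
  norm_num

lemma theta2_add_half : θ2 τ (z + 1 / 2) = -θ τ z := by
  rw [θ2, show z + 1 / 2 + 1 / 2 = z + 1 by ring, theta_add_one]

lemma theta4_add_half : θ4 τ (z + 1 / 2) = θ3 τ z := by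
  rw [θ4, show z + 1 / 2 + 1 / 2 = z + 1 by ring, theta3_eq_jacobiTheta₂, theta3_eq_jacobiTheta₂,
    jacobiTheta₂_add_left]

lemma theta2_add_half_period : θ2 τ (z + τ / 2) = thE τ z * θ3 τ z := by
  unfold θ3 thE θ2
  rw [← Complex.exp_add, ← mul_assoc, ← Complex.exp_add,
    show -(Real.pi * I * τ / 4) - Real.pi * I * z +
      (Real.pi * I * τ / 4 + Real.pi * I * z) = 0 by ring, Complex.exp_zero, one_mul]
  congr 1
  ring

lemma thE_sub_half : thE τ (z - 1 / 2) = I * thE τ z := by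
  unfold thE
  rw [show -(Real.pi * I * τ / 4) - Real.pi * I * (z - 1 / 2) =
    Real.pi / 2 * I + (-(Real.pi * I * τ / 4) - Real.pi * I * z) by ring, Complex.exp_add,
    Complex.exp_pi_div_two_mul_I]

lemma theta_add_half_period : θ τ (z + τ / 2) = I * thE τ z * θ4 τ z := by
  have := theta2_add_half_period τ (z - 1 / 2)
  rw [θ2, show z - 1 / 2 + τ / 2 + 1 / 2 = z + τ / 2 by ring, thE_sub_half] at this
  rw [this, ← theta4_add_half τ (z - 1 / 2), sub_add_cancel]

lemma theta_neg : θ τ (-z) = -θ τ z := by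
  have h := jacobiTheta₂_neg_left (-z + 1 / 2 - τ / 2) τ
  have h' := jacobiTheta₂_add_left' (z - 1 / 2 - τ / 2) τ
  have h'' := jacobiTheta₂_add_left (z - 1 / 2 - τ / 2) τ
  rw [show z - 1 / 2 - τ / 2 + τ = -(-z + 1 / 2 - τ / 2) by ring, h] at h'
  rw [theta_eq_jacobiTheta₂, theta_eq_jacobiTheta₂, h', ← h'',
    show z - 1 / 2 - τ / 2 + 1 = z + 1 / 2 - τ / 2 by ring, ← mul_assoc, mul_assoc I,
    ← Complex.exp_add,
    show Real.pi * I * τ / 4 - Real.pi * I * -z +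
      -Real.pi * I * (τ + 2 * (z - 1 / 2 - τ / 2)) =
      (Real.pi * I * τ / 4 - Real.pi * I * z) + Real.pi * I by ring, Complex.exp_add _ (Real.pi * I),
    Complex.exp_pi_mul_I]
  ring

lemma theta_zero : θ τ 0 = 0 := by
  have := theta_neg τ 0
  rw [neg_zero] at this
  exact self_eq_neg.mp this

lemma theta2_neg : θ2 τ (-z) = θ2 τ z := by
  have h := theta_add_one τ (z - 1 / 2)
  rw [θ2, θ2, show -z + 1 / 2 = -(z - 1 / 2) by ring, theta_neg, ← h]
  congr 1
  ring

lemma theta3_neg : θ3 τ (-z) = θ3 τ z := by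
  rw [theta3_eq_jacobiTheta₂, theta3_eq_jacobiTheta₂, jacobiTheta₂_neg_left]

lemma theta4_neg : θ4 τ (-z) = θ4 τ z := by
  rw [θ4, show -z + 1 / 2 = -(z - 1 / 2) by ring, theta3_neg, ← theta4_add_half, sub_add_cancel]

lemma thE_mul_neg_sub_half_period : thE τ z * thE τ (-(z + τ / 2)) = 1 := by
  rw [thE, thE, ← Complex.exp_add, ← Complex.exp_zero]
  congr 1
  ring

lemma theta3_add_half_period : θ3 τ (z + τ / 2) = thE τ z * θ2 τ z := by
  have h := theta2_add_half_period τ (-(z + τ / 2))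
  rw [theta3_neg, show -(z + τ / 2) + τ / 2 = -z by ring, theta2_neg] at h
  linear_combination -θ3 τ (z + τ / 2) * thE_mul_neg_sub_half_period τ z - thE τ z * h

lemma theta4_add_half_period : θ4 τ (z + τ / 2) = I * thE τ z * θ τ z := by
  have h := theta_add_half_period τ (-(z + τ / 2))
  rw [theta4_neg, show -(z + τ / 2) + τ / 2 = -z by ring, theta_neg] at h
  linear_combination -θ4 τ (z + τ / 2) * thE_mul_neg_sub_half_period τ z + I * thE τ z * h
    + thE τ z * thE τ (-(z + τ / 2)) * θ4 τ (z + τ / 2) * I_sq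

end Basic

section Products

variable (τ : ℂ) (hτ : 0 < τ.im)
include hτ

lemma theta3_mul (u h : ℂ) : θ3 τ (u + h) * θ3 τ (u - h) =
    thA τ (2 * u) * thA τ (2 * h) + thB τ (2 * u) * thB τ (2 * h) := by
  rw [theta3_eq_jacobiTheta₂, theta3_eq_jacobiTheta₂, jacobiTheta₂_mul τ hτ]

lemma theta4_mul (u h : ℂ) : θ4 τ (u + h) * θ4 τ (u - h) =
    thA τ (2 * u) * thA τ (2 * h) - thB τ (2 * u) * thB τ (2 * h) := by
  have := theta3_mul τ hτ (u + 1 / 2) h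
  rw [show 2 * (u + 1 / 2) = 2 * u + 1 by ring, thA_add_one, thB_add_one] at this
  rw [θ4, θ4, show u + h + 1 / 2 = u + 1 / 2 + h by ring,
    show u - h + 1 / 2 = u + 1 / 2 - h by ring, this]
  ring

lemma theta_mul (u h : ℂ) : θ τ (u + h) * θ τ (u - h) =
    thA τ (2 * u) * thB τ (2 * h) - thB τ (2 * u) * thA τ (2 * h) := by
  have := jacobiTheta₂_mul τ hτ (u + 1 / 2 - τ / 2) h
  rw [show 2 * (u + 1 / 2 - τ / 2) = 2 * u + 1 - τ by ring, thA_sub, thB_sub, thA_add_one,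
    thB_add_one] at this
  rw [theta_eq_jacobiTheta₂, theta_eq_jacobiTheta₂,
    show u + h + 1 / 2 - τ / 2 = u + 1 / 2 - τ / 2 + h by ring,
    show u - h + 1 / 2 - τ / 2 = u + 1 / 2 - τ / 2 - h by ring,
    mul_mul_mul_comm, this, mul_mul_mul_comm, I_mul_I, ← Complex.exp_add]
  have e : Complex.exp (Real.pi * I * τ / 4 - Real.pi * I * (u + h) +
      (Real.pi * I * τ / 4 - Real.pi * I * (u - h))) *
      Complex.exp (Real.pi * I * (2 * u + 1) - Real.pi * I * τ / 2) = -1 := by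
    rw [← Complex.exp_add, ← Complex.exp_pi_mul_I]
    congr 1
    ring
  linear_combination (-(thA τ (2 * u) * thB τ (2 * h)) + thB τ (2 * u) * thA τ (2 * h)) * e

lemma theta2_mul (u h : ℂ) : θ2 τ (u + h) * θ2 τ (u - h) =
    thA τ (2 * u) * thB τ (2 * h) + thB τ (2 * u) * thA τ (2 * h) := by
  have := theta_mul τ hτ (u + 1 / 2) h
  rw [show 2 * (u + 1 / 2) = 2 * u + 1 by ring, thA_add_one, thB_add_one] at this
  rw [θ2, θ2, show u + h + 1 / 2 = u + 1 / 2 + h by ring,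
    show u - h + 1 / 2 = u + 1 / 2 - h by ring, this]
  ring

/-- Weierstrass's three-term identity. -/
lemma theta_three_term (a b c d : ℂ) :
    θ τ (a + b) * θ τ (a - b) * (θ τ (c + d) * θ τ (c - d)) -
      θ τ (a + c) * θ τ (a - c) * (θ τ (b + d) * θ τ (b - d)) +
      θ τ (a + d) * θ τ (a - d) * (θ τ (b + c) * θ τ (b - c)) = 0 := by
  simp only [theta_mul τ hτ]
  ring

/-- Riemann's quartic identity for four arguments of sum zero after translation by `z`. -/
lemma two_mul_fV (α β γ z : ℂ) : 2 * fV τ α β γ z =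
    -(θ τ (α + β) * θ τ (α + γ) * θ τ (β + γ) * θ τ (2 * z)) -
      θ2 τ (α + β) * θ2 τ (α + γ) * θ2 τ (β + γ) * θ2 τ (2 * z) +
      θ3 τ (α + β) * θ3 τ (α + γ) * θ3 τ (β + γ) * θ3 τ (2 * z) -
      θ4 τ (α + β) * θ4 τ (α + γ) * θ4 τ (β + γ) * θ4 τ (2 * z) := by
  have key : ∀ t : ℂ → ℂ → ℂ, ∀ w₁ w₂ w₃ w₄ : ℂ,
      w₁ + w₂ = 2 * z → w₁ - w₂ = α + β → w₃ + w₄ = α + γ → w₃ - w₄ = -(β + γ) →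
      t τ (w₁ + w₂) * t τ (w₁ - w₂) * (t τ (w₃ + w₄) * t τ (w₃ - w₄)) =
        t τ (α + β) * t τ (α + γ) * t τ (-(β + γ)) * t τ (2 * z) := by
    intro t w₁ w₂ w₃ w₄ h1 h2 h3 h4
    rw [h1, h2, h3, h4]
    ring
  have hs := fun t => key t (z + (α + β) / 2) (z - (α + β) / 2) ((α - β) / 2)
    (γ + (α + β) / 2) (by ring) (by ring) (by ring) (by ring)
  have h1 := hs θ
  have h2 := hs θ2
  have h3 := hs θ3
  have h4 := hs θ4
  rw [theta_neg, theta_mul τ hτ, theta_mul τ hτ] at h1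
  rw [theta2_neg, theta2_mul τ hτ, theta2_mul τ hτ] at h2
  rw [theta3_neg, theta3_mul τ hτ, theta3_mul τ hτ] at h3
  rw [theta4_neg, theta4_mul τ hτ, theta4_mul τ hτ] at h4
  have f1 := theta_mul τ hτ (z + (α + β) / 2) ((α - β) / 2)
  have f2 := theta_mul τ hτ (z - (α + β) / 2) (γ + (α + β) / 2)
  rw [show z + (α + β) / 2 + (α - β) / 2 = z + α by ring,
    show z + (α + β) / 2 - (α - β) / 2 = z + β by ring] at f1
  rw [show z - (α + β) / 2 + (γ + (α + β) / 2) = z + γ by ring,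
    show z - (α + β) / 2 - (γ + (α + β) / 2) = z - α - β - γ by ring] at f2
  have hf : fV τ α β γ z =
      θ τ (z + α) * θ τ (z + β) * (θ τ (z + γ) * θ τ (z - α - β - γ)) := by
    simp only [fV]
    ring
  rw [hf, f1, f2]
  linear_combination h1 - h2 + h3 - h4

omit hτ in
lemma theta_add_period_half (z : ℂ) : θ τ (z + τ / 2 + 1 / 2) = thE τ z * θ3 τ z :=
  theta2_add_half_period τ z

omit hτ in
lemma theta_add_tau (z : ℂ) :
    θ τ (z + τ) = -(thE τ z * thE τ (z + τ / 2)) * θ τ z := by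
  rw [show z + τ = z + τ / 2 + τ / 2 by ring, theta_add_half_period, theta4_add_half_period]
  linear_combination thE τ (z + τ / 2) * thE τ z * θ τ z * I_sq

end Products

section Zeros

variable (τ : ℂ) (hτ : 0 < τ.im)
include hτ

lemma differentiable_theta : Differentiable ℂ (θ τ) := by
  have : θ τ = fun z => I * Complex.exp (Real.pi * I * τ / 4 - Real.pi * I * z) *
      jacobiTheta₂ (z + 1 / 2 - τ / 2) τ := funext fun z => theta_eq_jacobiTheta₂ τ z
  rw [this]
  intro z
  have h := (differentiableAt_jacobiTheta₂_fst (z + 1 / 2 - τ / 2) hτ).comp z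
    (f := fun z => z + 1 / 2 - τ / 2) (by fun_prop)
  refine DifferentiableAt.mul (by fun_prop) h

lemma exists_jacobiTheta₂_ne_zero : ∃ z, jacobiTheta₂ z τ ≠ 0 := by
  by_contra! H
  have hk : ∀ k : ℕ, ∀ z, jacobiTheta₂ z (2 ^ k * τ) = 0 := by
    intro k
    induction k with
    | zero => simpa using H
    | succ k ih =>
      intro z
      have him : 0 < ((2 : ℂ) ^ k * τ).im := by
        have : ((2 : ℂ) ^ k * τ).im = 2 ^ k * τ.im := by
          rw [show (2 : ℂ) ^ k = ((2 ^ k : ℝ) : ℂ) by push_cast; rfl, Complex.im_ofReal_mul]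
        rw [this]
        positivity
      have h3 := theta3_mul _ him (z / 2) (z / 2)
      have h4 := theta4_mul _ him (z / 2) (z / 2)
      simp only [θ4, theta3_eq_jacobiTheta₂, ih, mul_zero] at h3 h4
      rw [mul_div_cancel₀ z two_ne_zero] at h3 h4
      have : thA (2 ^ k * τ) z * thA (2 ^ k * τ) z = 0 := by linear_combination -(h3 + h4) / 2
      rw [pow_succ, mul_comm _ (2 : ℂ), mul_assoc]
      exact mul_self_eq_zero.mp this
  obtain ⟨k, hk1⟩ : ∃ k : ℕ, 1 / τ.im < 2 ^ k := pow_unbounded_of_one_lt _ one_lt_two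
  have him : ((2 : ℂ) ^ k * τ).im = 2 ^ k * τ.im := by
    rw [show (2 : ℂ) ^ k = ((2 ^ k : ℝ) : ℂ) by push_cast; rfl, Complex.im_ofReal_mul]
  have h1 : 1 < ((2 : ℂ) ^ k * τ).im := by
    rw [him]
    exact (div_lt_iff₀ hτ).mp hk1
  have hb := norm_jacobiTheta_sub_one_le (τ := 2 ^ k * τ) (by linarith)
  rw [jacobiTheta_eq_jacobiTheta₂, hk k 0, zero_sub, norm_neg, norm_one] at hb
  have hexp : Real.exp (-Real.pi * ((2 : ℂ) ^ k * τ).im) < 1 / 3 := by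
    have e1 : (3 : ℝ) < Real.exp (Real.pi * ((2 : ℂ) ^ k * τ).im) := by
      nlinarith [Real.add_one_le_exp (Real.pi * ((2 : ℂ) ^ k * τ).im), Real.pi_gt_three]
    rw [neg_mul, Real.exp_neg, ← one_div]
    exact one_div_lt_one_div_of_lt (by norm_num) e1
  have hpos := Real.exp_pos (-Real.pi * ((2 : ℂ) ^ k * τ).im)
  rw [div_mul_eq_mul_div, le_div_iff₀ (by linarith)] at hb
  linarith

lemma exists_theta_ne_zero : ∃ z, θ τ z ≠ 0 := by
  obtain ⟨z, hz⟩ := exists_jacobiTheta₂_ne_zero τ hτ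
  refine ⟨z - 1 / 2 + τ / 2, ?_⟩
  rw [theta_eq_jacobiTheta₂, show z - 1 / 2 + τ / 2 + 1 / 2 - τ / 2 = z by ring]
  exact mul_ne_zero (mul_ne_zero I_ne_zero (Complex.exp_ne_zero _)) hz

end Zeros

open Filter Topology in
/-- An entire function whose vanishing orders dominate those of a nonzero entire function is
divisible by it. -/
lemma exists_entire_quotient {f g : ℂ → ℂ} (hf : Differentiable ℂ f) (hg : Differentiable ℂ g)
    (hg0 : ∀ z, analyticOrderAt g z ≠ ⊤) (hle : ∀ z, analyticOrderAt g z ≤ analyticOrderAt f z) :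
    ∃ k : ℂ → ℂ, Differentiable ℂ k ∧ ∀ z, f z = k z * g z := by
  have hm : MeromorphicOn (f / g) Set.univ := fun z _ =>
    (hf.analyticAt z).meromorphicAt.div (hg.analyticAt z).meromorphicAt
  have ha : ∀ z, AnalyticAt ℂ (toMeromorphicNFOn (f / g) Set.univ) z := by
    intro z
    have hnf := meromorphicNFOn_toMeromorphicNFOn (f / g) Set.univ (Set.mem_univ z)
    rw [← hnf.meromorphicOrderAt_nonneg_iff_analyticAt,
      meromorphicOrderAt_toMeromorphicNFOn hm (Set.mem_univ z),
      meromorphicOrderAt_div (hf.analyticAt z).meromorphicAt (hg.analyticAt z).meromorphicAt,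
      (hf.analyticAt z).meromorphicOrderAt_eq, (hg.analyticAt z).meromorphicOrderAt_eq]
    have h0 := hg0 z
    have h1 := hle z
    generalize analyticOrderAt g z = a at h0 h1
    generalize analyticOrderAt f z = b at h1
    lift a to ℕ using h0
    cases b with
    | top => simp
    | coe b =>
      have : a ≤ b := by exact_mod_cast h1
      simp only [ENat.map_natCast]
      norm_cast
      simp
  refine ⟨_, fun z => (ha z).differentiableAt, fun z => ?_⟩
  have e1 : ∀ᶠ w in 𝓝[≠] z, g w ≠ 0 := by
    rcases (hg.analyticAt z).eventually_eq_zero_or_eventually_ne_zero with h | h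
    · exact absurd (analyticOrderAt_eq_top.mpr h) (hg0 z)
    · exact h
  have e2 : f =ᶠ[𝓝[≠] z] fun w => toMeromorphicNFOn (f / g) Set.univ w * g w := by
    filter_upwards [e1, hm.toMeromorphicNFOn_eq_self_on_nhdsNE (Set.mem_univ z)] with w h1 h2
    rw [h2, Pi.div_apply, div_mul_cancel₀ _ h1]
  exact ((hf z).continuousAt.eventuallyEq_nhds_iff_eventuallyEq_nhdsNE
    ((ha z).continuousAt.mul (hg z).continuousAt)).mp e2 |>.eq_of_nhds

/-- An entire function whose norm is doubly periodic is constant. -/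
lemma Differentiable.const_of_norm_periodic {τ : ℂ} (hτ : 0 < τ.im) {g : ℂ → ℂ}
    (hg : Differentiable ℂ g) (h1 : ∀ z, ‖g (z + 1)‖ = ‖g z‖) (h2 : ∀ z, ‖g (z + τ)‖ = ‖g z‖)
    (z w : ℂ) : g z = g w := by
  refine hg.apply_eq_apply_of_bounded ?_ z w
  have hp1 : Function.Periodic (fun z => ‖g z‖) 1 := h1
  have hp2 : Function.Periodic (fun z => ‖g z‖) τ := h2
  have hK : IsCompact (Complex.reProdIm (Set.Icc 0 1) (Set.Icc 0 τ.im)) :=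
    isCompact_Icc.reProdIm isCompact_Icc
  obtain ⟨M, hM⟩ := hK.exists_bound_of_continuousOn hg.continuous.continuousOn
  rw [isBounded_iff_forall_norm_le]
  refine ⟨M, ?_⟩
  rintro _ ⟨u, rfl⟩
  set n : ℤ := ⌊u.im / τ.im⌋ with hn
  set m : ℤ := ⌊(u - n * τ).re⌋ with hm
  have e : ‖g u‖ = ‖g (u - n * τ - m * 1)‖ := by
    have a1 := hp2.sub_int_mul_eq (x := u) n
    have a2 := hp1.sub_int_mul_eq (x := u - n * τ) m
    exact (a2.trans a1).symm
  rw [e]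
  apply hM
  rw [Complex.mem_reProdIm]
  have i1 := Int.floor_le (u.im / τ.im)
  have i2 := (Int.lt_floor_add_one (u.im / τ.im)).le
  rw [← hn] at i1 i2
  rw [le_div_iff₀ hτ] at i1
  rw [div_le_iff₀ hτ] at i2
  have r1 := Int.floor_le ((u - n * τ).re)
  have r2 := (Int.lt_floor_add_one ((u - n * τ).re)).le
  rw [← hm] at r1 r2
  have er : (u - n * τ - m * 1).re = (u - n * τ).re - m := by simp
  have ei : (u - n * τ - m * 1).im = u.im - n * τ.im := by simp
  rw [er, ei]
  constructor <;> constructor <;> linarith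

/-- A sequence of natural numbers in arithmetic progression is nondecreasing. -/
lemma le_of_arith_prog {f : ℕ → ℕ} (h : ∀ n, f (n + 2) + f n = 2 * f (n + 1)) : f 0 ≤ f 1 := by
  have key : ∀ n : ℕ, (f n : ℤ) = f 0 + n * ((f 1 : ℤ) - f 0) ∧
      (f (n + 1) : ℤ) = f 0 + (n + 1) * ((f 1 : ℤ) - f 0) := by
    intro n
    induction n with
    | zero => simp
    | succ n ih =>
      have := h n
      zify at this
      refine ⟨by push_cast; exact ih.2, ?_⟩
      push_cast
      rw [show n + 1 + 1 = n + 2 from rfl]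
      linear_combination this + 2 * ih.2 - ih.1
  by_contra! hlt
  have := (key (f 0 + 1)).1
  have h0 : (0 : ℤ) ≤ f (f 0 + 1) := by positivity
  push_cast at this
  have : ((f 1 : ℤ) - f 0) ≤ -1 := by omega
  nlinarith

section Zeros

variable (τ : ℂ) (hτ : 0 < τ.im)
include hτ

lemma analyticOrderAt_theta_ne_top (z : ℂ) : analyticOrderAt (θ τ) z ≠ ⊤ := by
  obtain ⟨w, hw⟩ := exists_theta_ne_zero τ hτ
  have ha : AnalyticOnNhd ℂ (θ τ) Set.univ := fun z _ => (differentiable_theta τ hτ).analyticAt z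
  refine ha.analyticOrderAt_ne_top_of_isPreconnected isPreconnected_univ (Set.mem_univ w)
    (Set.mem_univ z) ?_
  rw [(ha w (Set.mem_univ w)).analyticOrderAt_eq_zero.mpr hw]
  exact ENat.zero_ne_top

/-- A product of an entire function with a translate of `θ` vanishes only if the former does. -/
lemma eq_zero_of_mul_theta {k : ℂ → ℂ} (hk : Differentiable ℂ k) (c : ℂ)
    (h : ∀ z, k z * θ τ (z + c) = 0) (z : ℂ) : k z = 0 := by
  have ht : Differentiable ℂ fun z => θ τ (z + c) :=
    (differentiable_theta τ hτ).comp (differentiable_id.add_const c)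
  rcases AnalyticOnNhd.eq_zero_or_eq_zero_of_mul_eq_zero (U := Set.univ)
    (fun z _ => hk.analyticAt z) (fun z _ => ht.analyticAt z) (fun z _ => h z)
    isPreconnected_univ with h | h
  · exact h z (Set.mem_univ z)
  · obtain ⟨w, hw⟩ := exists_theta_ne_zero τ hτ
    have := h (w - c) (Set.mem_univ _)
    rw [sub_add_cancel] at this
    exact absurd this hw

/-- The zeros of `θ` lie on the period lattice. -/
theorem theta_eq_zero {x : ℂ} (hx : θ τ x = 0) : ∃ m n : ℤ, x = m + τ * n := by
  have hd := differentiable_theta τ hτ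
  -- the square of `θ` is proportional to the product of two opposite translates
  obtain ⟨C, hC, hsq⟩ : ∃ C : ℂ, C ≠ 0 ∧
      ∀ u, θ τ (u + x) * θ τ (u - x) = C * (θ τ u * θ τ u) := by
    have h3 : ∀ u v, θ τ (u + x) * θ τ (u - x) * (θ τ v * θ τ v) =
        θ τ (v + x) * θ τ (v - x) * (θ τ u * θ τ u) := by
      intro u v
      have h := theta_three_term τ hτ u x v 0
      have hs : θ τ (x - v) = -θ τ (v - x) := by rw [← theta_neg, neg_sub]
      simp only [add_zero, sub_zero, hx] at h
      rw [hs, add_comm x v] at h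
      linear_combination h
    obtain ⟨v, hv⟩ : ∃ v, θ τ (v + x) * θ τ (v - x) ≠ 0 := by
      by_contra! H
      have h1 : ∀ z, θ τ (z + x) = 0 := fun z => by
        refine eq_zero_of_mul_theta τ hτ (k := fun z => θ τ (z + x))
          (hd.comp (differentiable_id.add_const x)) (-x) (fun z => ?_) z
        rw [← sub_eq_add_neg]
        exact H z
      obtain ⟨w, hw⟩ := exists_theta_ne_zero τ hτ
      exact hw (by simpa using h1 (w - x))
    have hv0 : θ τ v ≠ 0 := by
      intro h0
      obtain ⟨w, hw⟩ := exists_theta_ne_zero τ hτ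
      have := h3 w v
      rw [h0, mul_zero, mul_zero] at this
      exact mul_ne_zero hv (mul_ne_zero hw hw) this.symm
    refine ⟨θ τ (v + x) * θ τ (v - x) / (θ τ v * θ τ v),
      div_ne_zero hv (mul_ne_zero hv0 hv0), fun u => ?_⟩
    have := h3 u v
    field_simp
    linear_combination this
  have hT : ∀ c, Differentiable ℂ fun z => θ τ (z + c) := fun c =>
    hd.comp (differentiable_id.add_const c)
  have hTo : ∀ c z, analyticOrderAt (fun z => θ τ (z + c)) z = analyticOrderAt (θ τ) (z + c) := by
    intro c z
    have := analyticOrderAt_comp_of_deriv_ne_zero (f := θ τ) (g := fun z => z + c) (z₀ := z)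
      (by fun_prop) (by simp)
    exact this
  have hle : ∀ z, analyticOrderAt (θ τ) z ≤ analyticOrderAt (fun z => θ τ (z + x)) z := by
    intro z
    rw [hTo]
    have hrec : ∀ u, analyticOrderNatAt (θ τ) (u + x) + analyticOrderNatAt (θ τ) (u - x) =
        2 * analyticOrderNatAt (θ τ) u := by
      intro u
      have h1 : analyticOrderAt ((fun z => θ τ (z + x)) * (fun z => θ τ (z + -x))) u =
          analyticOrderAt ((fun _ => C) * (θ τ * θ τ)) u := by
        congr 1
        funext z
        simpa [← sub_eq_add_neg] using hsq z
      rw [analyticOrderAt_mul ((hT x).analyticAt u) ((hT (-x)).analyticAt u),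
        analyticOrderAt_mul analyticAt_const ((hd.mul hd).analyticAt u),
        analyticOrderAt_mul (hd.analyticAt u) (hd.analyticAt u), hTo, hTo,
        analyticAt_const.analyticOrderAt_eq_zero.mpr hC,
        ← Nat.cast_analyticOrderNatAt (analyticOrderAt_theta_ne_top τ hτ _),
        ← Nat.cast_analyticOrderNatAt (analyticOrderAt_theta_ne_top τ hτ _),
        ← Nat.cast_analyticOrderNatAt (analyticOrderAt_theta_ne_top τ hτ u),
        ← sub_eq_add_neg] at h1
      rw [two_mul]
      rw [zero_add] at h1
      exact_mod_cast h1
    rw [← Nat.cast_analyticOrderNatAt (analyticOrderAt_theta_ne_top τ hτ z),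
      ← Nat.cast_analyticOrderNatAt (analyticOrderAt_theta_ne_top τ hτ (z + x))]
    have := le_of_arith_prog (f := fun n : ℕ => analyticOrderNatAt (θ τ) (z + n * x)) (by
      intro n
      have := hrec (z + (n + 1) * x)
      rw [show z + (n + 1) * x + x = z + (n + 2) * x by ring,
        show z + (n + 1) * x - x = z + n * x by ring] at this
      push_cast
      exact this)
    simp only [Nat.cast_zero, zero_mul, add_zero, Nat.cast_one, one_mul] at this
    exact_mod_cast this
  obtain ⟨k, hk, hkθ⟩ := exists_entire_quotient (hT x) hd (analyticOrderAt_theta_ne_top τ hτ) hle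
  have hk1 : ∀ z, k (z + 1) = k z := by
    intro z
    refine sub_eq_zero.mp (eq_zero_of_mul_theta τ hτ (k := fun z => k (z + 1) - k z)
      ((hk.comp (differentiable_id.add_const 1)).sub hk) 0 (fun z => ?_) z)
    have h1 := hkθ (z + 1)
    rw [show z + 1 + x = z + x + 1 by ring, theta_add_one, theta_add_one, hkθ z] at h1
    rw [add_zero]
    linear_combination h1
  have hE : ∀ z, thE τ z * thE τ (z + τ / 2) =
      Complex.exp (-(Real.pi * I * τ) - 2 * Real.pi * I * z) := by
    intro z
    rw [thE, thE, ← Complex.exp_add]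
    congr 1
    ring
  have hkτ : ∀ z, k (z + τ) = Complex.exp (-(2 * Real.pi * I * x)) * k z := by
    intro z
    refine sub_eq_zero.mp (eq_zero_of_mul_theta τ hτ
      (k := fun z => k (z + τ) - Complex.exp (-(2 * Real.pi * I * x)) * k z)
      ((hk.comp (differentiable_id.add_const τ)).sub (hk.const_mul _)) 0 (fun z => ?_) z)
    have h1 := hkθ (z + τ)
    rw [show z + τ + x = z + x + τ by ring, theta_add_tau, theta_add_tau, hkθ z, hE, hE,
      show -(Real.pi * I * τ) - 2 * Real.pi * I * (z + x) =
        -(2 * Real.pi * I * x) + (-(Real.pi * I * τ) - 2 * Real.pi * I * z) by ring,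
      Complex.exp_add] at h1
    rw [add_zero]
    refine mul_left_cancel₀ (Complex.exp_ne_zero (-(Real.pi * I * τ) - 2 * Real.pi * I * z)) ?_
    linear_combination h1
  set t : ℝ := -x.im / τ.im with ht
  have htτ : t * τ.im = -x.im := by rw [ht]; field_simp
  have hconst := Differentiable.const_of_norm_periodic hτ
    (g := fun z => k z * Complex.exp (-(2 * Real.pi * I * t * z))) (by fun_prop)
    (fun z => by
      rw [hk1, norm_mul, norm_mul, Complex.norm_exp, Complex.norm_exp]
      congr 2
      simp)
    (fun z => by
      rw [hkτ, norm_mul, norm_mul, norm_mul, Complex.norm_exp, Complex.norm_exp, Complex.norm_exp,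
        mul_comm (Real.exp _) ‖k z‖, mul_assoc, ← Real.exp_add]
      congr 2
      simp
      linear_combination 2 * Real.pi * htτ)
  have hk0 : k 0 ≠ 0 := by
    intro h0
    obtain ⟨w, hw⟩ := exists_theta_ne_zero τ hτ
    have h1 := hconst (w - x) 0
    rw [h0, zero_mul, mul_eq_zero, or_iff_left (Complex.exp_ne_zero _)] at h1
    have h2 := hkθ (w - x)
    simp only [sub_add_cancel] at h2
    rw [h1, zero_mul] at h2
    exact hw h2
  have e1 := hconst 1 0
  have e2 := hconst τ 0
  have k1 := hk1 0
  have k2 := hkτ 0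
  rw [zero_add] at k1 k2
  rw [k1, mul_zero, neg_zero, mul_one] at e1
  rw [k2, mul_zero, neg_zero, Complex.exp_zero, mul_one, mul_comm (Complex.exp _) (k 0), mul_assoc,
    ← Complex.exp_add] at e2
  rw [Complex.exp_zero] at e1
  obtain ⟨m, hm⟩ := Complex.exp_eq_one_iff.mp (mul_left_cancel₀ hk0 (e1.trans rfl))
  obtain ⟨n, hn⟩ := Complex.exp_eq_one_iff.mp (mul_left_cancel₀ hk0 (e2.trans (mul_one _).symm))
  refine ⟨-n, m, ?_⟩
  have h2 : (2 * Real.pi * I : ℂ) ≠ 0 := Complex.two_pi_I_ne_zero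
  have hmt : (t : ℂ) = -m := by
    apply mul_left_cancel₀ h2
    linear_combination -hm
  rw [hmt] at hn
  apply mul_left_cancel₀ h2
  push_cast
  linear_combination -hn

end Zeros

section Addition

variable (τ : ℂ) (u h : ℂ)

lemma theta_sub_half : θ τ (h - 1 / 2) = -θ2 τ h := by
  rw [← neg_eq_iff_eq_neg, ← theta2_add_half, sub_add_cancel]

lemma theta_sub_half_period : θ τ (h - τ / 2) = -(I * thE τ (-h) * θ4 τ h) := by
  rw [← neg_sub, theta_neg, sub_eq_add_neg, add_comm, theta_add_half_period, theta4_neg]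

lemma theta_sub_period_half : θ τ (h - τ / 2 - 1 / 2) = -(thE τ (-h) * θ3 τ h) := by
  rw [show h - τ / 2 - 1 / 2 = -(-h + τ / 2 + 1 / 2) by ring, theta_neg, theta_add_period_half,
    theta3_neg]

lemma thE_mul_thE_neg : thE τ u * thE τ (-h) = thE τ 0 * thE τ (u - h) := by
  rw [thE, thE, thE, thE, ← Complex.exp_add, ← Complex.exp_add]
  congr 1
  ring

variable (hτ : 0 < τ.im)
include hτ

/-- Addition formula for `θ₁(u+h)θ₂(u-h)`. -/
theorem theta_add_mul_theta2_sub : θ τ (u + h) * θ2 τ (u - h) * (θ3 τ 0 * θ4 τ 0) =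
    θ τ u * θ2 τ u * (θ3 τ h * θ4 τ h) + θ3 τ u * θ4 τ u * (θ τ h * θ2 τ h) := by
  have key := theta_three_term τ hτ (u + 1 / 4) (h - 1 / 4) (1 / 4 + τ / 2) (1 / 4)
  rw [show u + 1 / 4 + (h - 1 / 4) = u + h by ring,
    show u + 1 / 4 - (h - 1 / 4) = u - h + 1 / 2 by ring,
    show 1 / 4 + τ / 2 + 1 / 4 = 0 + τ / 2 + 1 / 2 by ring,
    show 1 / 4 + τ / 2 - 1 / 4 = 0 + τ / 2 by ring,
    show u + 1 / 4 + (1 / 4 + τ / 2) = u + τ / 2 + 1 / 2 by ring,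
    show u + 1 / 4 - (1 / 4 + τ / 2) = u - τ / 2 by ring,
    show h - 1 / 4 + 1 / 4 = h by ring,
    show h - 1 / 4 - 1 / 4 = h - 1 / 2 by ring,
    show u + 1 / 4 + 1 / 4 = u + 1 / 2 by ring,
    show u + 1 / 4 - 1 / 4 = u by ring,
    show h - 1 / 4 + (1 / 4 + τ / 2) = h + τ / 2 by ring,
    show h - 1 / 4 - (1 / 4 + τ / 2) = h - τ / 2 - 1 / 2 by ring,
    theta_add_period_half, theta_add_period_half, theta_add_half, theta_add_half, theta_sub_half,
    theta_sub_period_half, theta_add_half_period, theta_add_half_period,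
    theta_sub_half_period] at key
  have e1 := thE_mul_thE_neg τ u u
  have e2 := thE_mul_thE_neg τ h h
  rw [sub_self] at e1 e2
  refine mul_left_cancel₀ (mul_ne_zero I_ne_zero (mul_ne_zero (thE_ne_zero τ 0) (thE_ne_zero τ 0)))
    ?_
  linear_combination key + I * θ3 τ u * θ4 τ u * θ τ h * θ2 τ h * -e1 * -1 +
    I * θ τ u * θ2 τ u * θ3 τ h * θ4 τ h * e2

/-- Addition formula for `θ₁(u+h)θ₃(u-h)`. -/
theorem theta_add_mul_theta3_sub : θ τ (u + h) * θ3 τ (u - h) * (θ2 τ 0 * θ4 τ 0) =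
    θ τ u * θ3 τ u * (θ2 τ h * θ4 τ h) + θ2 τ u * θ4 τ u * (θ τ h * θ3 τ h) := by
  have key := theta_three_term τ hτ (u + (1 + τ) / 4) (h - (1 + τ) / 4) ((1 + τ) / 4 + 1 / 2)
    ((1 + τ) / 4)
  rw [show u + (1 + τ) / 4 + (h - (1 + τ) / 4) = u + h by ring,
    show u + (1 + τ) / 4 - (h - (1 + τ) / 4) = u - h + τ / 2 + 1 / 2 by ring,
    show (1 + τ) / 4 + 1 / 2 + (1 + τ) / 4 = 0 + τ / 2 + 1 by ring,
    show (1 + τ) / 4 + 1 / 2 - (1 + τ) / 4 = 0 + 1 / 2 by ring,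
    show u + (1 + τ) / 4 + ((1 + τ) / 4 + 1 / 2) = u + τ / 2 + 1 by ring,
    show u + (1 + τ) / 4 - ((1 + τ) / 4 + 1 / 2) = u - 1 / 2 by ring,
    show h - (1 + τ) / 4 + (1 + τ) / 4 = h by ring,
    show h - (1 + τ) / 4 - (1 + τ) / 4 = h - τ / 2 - 1 / 2 by ring,
    show u + (1 + τ) / 4 + (1 + τ) / 4 = u + τ / 2 + 1 / 2 by ring,
    show u + (1 + τ) / 4 - (1 + τ) / 4 = u by ring,
    show h - (1 + τ) / 4 + ((1 + τ) / 4 + 1 / 2) = h + 1 / 2 by ring,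
    show h - (1 + τ) / 4 - ((1 + τ) / 4 + 1 / 2) = -(-h + τ / 2 + 1) by ring,
    theta_neg, theta_add_one, theta_add_one, theta_add_one, theta_add_period_half,
    theta_add_period_half, theta_add_half, theta_add_half, theta_sub_half,
    theta_sub_period_half, theta_add_half_period, theta_add_half_period,
    theta_add_half_period, theta4_neg] at key
  have e1 := thE_mul_thE_neg τ u h
  refine mul_left_cancel₀ (mul_ne_zero I_ne_zero (mul_ne_zero (thE_ne_zero τ 0)
    (thE_ne_zero τ (u - h)))) ?_
  linear_combination -key + I * (θ τ u * θ3 τ u * (θ2 τ h * θ4 τ h) +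
    θ2 τ u * θ4 τ u * (θ τ h * θ3 τ h)) * e1

/-- Addition formula for `θ₁(u+h)θ₄(u-h)`. -/
theorem theta_add_mul_theta4_sub : θ τ (u + h) * θ4 τ (u - h) * (θ2 τ 0 * θ3 τ 0) =
    θ τ u * θ4 τ u * (θ2 τ h * θ3 τ h) + θ2 τ u * θ3 τ u * (θ τ h * θ4 τ h) := by
  have key := theta_three_term τ hτ (u + τ / 4) (h - τ / 4) (τ / 4 + 1 / 2) (τ / 4)
  rw [show u + τ / 4 + (h - τ / 4) = u + h by ring,
    show u + τ / 4 - (h - τ / 4) = u - h + τ / 2 by ring,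
    show τ / 4 + 1 / 2 + τ / 4 = 0 + τ / 2 + 1 / 2 by ring,
    show τ / 4 + 1 / 2 - τ / 4 = 0 + 1 / 2 by ring,
    show u + τ / 4 + (τ / 4 + 1 / 2) = u + τ / 2 + 1 / 2 by ring,
    show u + τ / 4 - (τ / 4 + 1 / 2) = u - 1 / 2 by ring,
    show h - τ / 4 + τ / 4 = h by ring,
    show h - τ / 4 - τ / 4 = h - τ / 2 by ring,
    show u + τ / 4 + τ / 4 = u + τ / 2 by ring,
    show u + τ / 4 - τ / 4 = u by ring,
    show h - τ / 4 + (τ / 4 + 1 / 2) = h + 1 / 2 by ring,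
    show h - τ / 4 - (τ / 4 + 1 / 2) = h - τ / 2 - 1 / 2 by ring,
    theta_add_period_half, theta_add_period_half, theta_add_half, theta_add_half, theta_sub_half,
    theta_sub_period_half, theta_sub_half_period, theta_add_half_period,
    theta_add_half_period] at key
  have e1 := thE_mul_thE_neg τ u h
  refine mul_left_cancel₀ (mul_ne_zero I_ne_zero (mul_ne_zero (thE_ne_zero τ 0)
    (thE_ne_zero τ (u - h)))) ?_
  linear_combination key + I * (θ τ u * θ4 τ u * (θ2 τ h * θ3 τ h) +
    θ2 τ u * θ3 τ u * (θ τ h * θ4 τ h)) * e1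

/-- Addition formula for `θ₃(u+h)θ₄(u-h)`. -/
theorem theta3_add_mul_theta4_sub : θ3 τ (u + h) * θ4 τ (u - h) * (θ3 τ 0 * θ4 τ 0) =
    θ3 τ u * θ4 τ u * (θ3 τ h * θ4 τ h) - θ τ u * θ2 τ u * (θ τ h * θ2 τ h) := by
  have key := theta_add_mul_theta2_sub τ (u + τ / 2) (-h) hτ
  rw [show u + τ / 2 + -h = u - h + τ / 2 by ring, show u + τ / 2 - -h = u + h + τ / 2 by ring,
    theta_neg, theta2_neg, theta3_neg, theta4_neg, theta_add_half_period, theta_add_half_period,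
    theta2_add_half_period, theta2_add_half_period, theta3_add_half_period,
    theta4_add_half_period] at key
  have e1 := thE_mul τ u h
  refine mul_left_cancel₀ (mul_ne_zero I_ne_zero (pow_ne_zero 2 (thE_ne_zero τ u))) ?_
  linear_combination key - I * θ3 τ (u + h) * θ4 τ (u - h) * (θ3 τ 0 * θ4 τ 0) * e1

/-- Addition formula for `θ₂(u+h)θ₄(u-h)`. -/
theorem theta2_add_mul_theta4_sub : θ2 τ (u + h) * θ4 τ (u - h) * (θ2 τ 0 * θ4 τ 0) =
    θ2 τ u * θ4 τ u * (θ2 τ h * θ4 τ h) - θ τ u * θ3 τ u * (θ τ h * θ3 τ h) := by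
  have key := theta_add_mul_theta3_sub τ (u + 1 / 2) h hτ
  rw [show u + 1 / 2 + h = u + h + 1 / 2 by ring, show u + 1 / 2 - h = u - h + 1 / 2 by ring,
    theta_add_half, theta_add_half, theta2_add_half, theta3_add_half, theta3_add_half,
    theta4_add_half] at key
  linear_combination key

/-- Addition formula for `θ₂(u+h)θ₃(u-h)`. -/
theorem theta2_add_mul_theta3_sub : θ2 τ (u + h) * θ3 τ (u - h) * (θ2 τ 0 * θ3 τ 0) =
    θ2 τ u * θ3 τ u * (θ2 τ h * θ3 τ h) - θ τ u * θ4 τ u * (θ τ h * θ4 τ h) := by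
  have key := theta_add_mul_theta4_sub τ (u + 1 / 2) h hτ
  rw [show u + 1 / 2 + h = u + h + 1 / 2 by ring, show u + 1 / 2 - h = u - h + 1 / 2 by ring,
    theta_add_half, theta_add_half, theta2_add_half, theta3_add_half, theta4_add_half,
    theta4_add_half] at key
  linear_combination key

end Addition

section Nonvanishing

variable (τ : ℂ) (hτ : 0 < τ.im)
include hτ

lemma theta_half_lattice_ne_zero (a b : ℤ) (h : Odd a ∨ Odd b) : θ τ (a / 2 + τ * b / 2) ≠ 0 := by
  intro h0
  obtain ⟨m, n, e⟩ := theta_eq_zero τ hτ h0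
  have him := congrArg Complex.im e
  have e2 : (a : ℂ) - 2 * m = (2 * n - b) * τ := by linear_combination 2 * e
  have e3 := congrArg Complex.im e2
  have e4 := congrArg Complex.re e2
  simp at e3 e4
  have hb : (2 * n - b : ℝ) = 0 := by
    rcases e3 with e3 | e3
    · exact e3
    · exact absurd e3 hτ.ne'
  rw [hb, zero_mul] at e4
  have hb' : 2 * n - b = 0 := by exact_mod_cast hb
  have ha' : a - 2 * m = 0 := by
    have : (a : ℝ) - 2 * m = 0 := by simpa using e4
    exact_mod_cast this
  rcases h with ⟨k, hk⟩ | ⟨k, hk⟩ <;> omega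

lemma theta_half_ne_zero : θ τ (1 / 2) ≠ 0 := by
  simpa using theta_half_lattice_ne_zero τ hτ 1 0 (Or.inl odd_one)

lemma theta_half_period_ne_zero : θ τ (τ / 2) ≠ 0 := by
  simpa using theta_half_lattice_ne_zero τ hτ 0 1 (Or.inr odd_one)

lemma theta2_zero_ne_zero : θ2 τ 0 ≠ 0 := by
  rw [← theta_add_half, zero_add]
  exact theta_half_ne_zero τ hτ

lemma theta3_zero_ne_zero : θ3 τ 0 ≠ 0 := by
  have h := theta_half_lattice_ne_zero τ hτ 1 1 (Or.inr odd_one)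
  rw [show ((1 : ℤ) : ℂ) / 2 + τ * ((1 : ℤ) : ℂ) / 2 = 0 + τ / 2 + 1 / 2 by push_cast; ring,
    theta_add_period_half] at h
  exact right_ne_zero_of_mul h

lemma theta4_zero_ne_zero : θ4 τ 0 ≠ 0 := by
  have h := theta_half_period_ne_zero τ hτ
  rw [← zero_add (τ / 2), theta_add_half_period] at h
  exact right_ne_zero_of_mul h

/-- The functions `θ₁, θ₂, θ₃, θ₄` are linearly independent, with coefficients in any module. -/
theorem theta_separation {M : Type*} [AddCommGroup M] [Module ℂ M] {m₁ m₂ m₃ m₄ : M}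
    (H : ∀ w, θ τ w • m₁ + θ2 τ w • m₂ + θ3 τ w • m₃ + θ4 τ w • m₄ = 0) :
    m₁ = 0 ∧ m₂ = 0 ∧ m₃ = 0 ∧ m₄ = 0 := by
  have hodd : ∀ w, θ τ w • m₁ + θ2 τ w • m₂ = 0 ∧ θ3 τ w • m₃ + θ4 τ w • m₄ = 0 := by
    intro w
    have h1 := H (w + 1 / 2 + 1 / 2)
    rw [theta_add_half, theta2_add_half, theta2_add_half, theta_add_half, theta3_add_half,
      theta4_add_half, theta4_add_half, theta3_add_half] at h1
    have h0 := H w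
    have two : (2 : ℂ) ≠ 0 := two_ne_zero
    constructor
    · apply (smul_eq_zero_iff_right two).mp
      linear_combination (norm := module) h0 - h1
    · apply (smul_eq_zero_iff_right two).mp
      linear_combination (norm := module) h0 + h1
  have z1 : θ τ (1 / 2) ≠ 0 := theta_half_ne_zero τ hτ
  have a0 := hodd 0
  have a1 := hodd (0 + 1 / 2)
  rw [theta_zero, zero_smul, zero_add] at a0
  rw [theta2_add_half, theta_zero, neg_zero, zero_smul, add_zero, theta_add_half] at a1
  have m1 := (smul_eq_zero_iff_right (theta2_zero_ne_zero τ hτ)).mp a1.1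
  have m2 := (smul_eq_zero_iff_right (theta2_zero_ne_zero τ hτ)).mp a0.1
  have a2 := (hodd (0 + τ / 2)).2
  rw [theta4_add_half_period, theta_zero, mul_zero, zero_smul, add_zero,
    theta3_add_half_period] at a2
  have m3 := (smul_eq_zero_iff_right (mul_ne_zero (thE_ne_zero τ 0)
    (theta2_zero_ne_zero τ hτ))).mp a2
  rw [m3, smul_zero, zero_add] at a0
  exact ⟨m1, m2, m3, (smul_eq_zero_iff_right (theta4_zero_ne_zero τ hτ)).mp a0.2⟩

variable {τ} in
/-- No theta function vanishes outside of the half-lattice. -/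
lemma theta_ne_zero_of_two_mul {η : ℂ} (hη : ¬ ∃ m n : ℤ, 2 * η = (m : ℂ) + τ * n) :
    θ τ η ≠ 0 ∧ θ2 τ η ≠ 0 ∧ θ3 τ η ≠ 0 ∧ θ4 τ η ≠ 0 := by
  have key : ∀ a b : ℤ, θ τ (η + a / 2 + τ * b / 2) ≠ 0 := by
    intro a b h
    obtain ⟨m, n, e⟩ := theta_eq_zero τ hτ h
    refine hη ⟨2 * m - a, 2 * n - b, ?_⟩
    push_cast
    linear_combination 2 * e
  refine ⟨by simpa using key 0 0, by simpa [θ2] using key 1 0, ?_, ?_⟩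
  · have h := key 1 1
    rw [show η + ((1 : ℤ) : ℂ) / 2 + τ * ((1 : ℤ) : ℂ) / 2 = η + τ / 2 + 1 / 2 by push_cast; ring,
      theta_add_period_half] at h
    exact right_ne_zero_of_mul h
  · have h := key 0 1
    rw [show η + ((0 : ℤ) : ℂ) / 2 + τ * ((1 : ℤ) : ℂ) / 2 = η + τ / 2 by push_cast; ring,
      theta_add_half_period] at h
    exact right_ne_zero_of_mul h

end Nonvanishing

section Relations

variable {A : Type*} [Ring A] [Algebra ℂ A] (τ η : ℂ)

/-- The combination `∑ ± θⱼ(p)θⱼ(q)θⱼ(r) • xⱼ`, which expresses twice the function `f(α,β,γ)` with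
`p = α + β`, `q = α + γ`, `r = β + γ` in terms of the functions `z ↦ θⱼ(2z)`. -/
def thetaComb {M : Type*} [AddCommGroup M] [Module ℂ M] (x : Fin 4 → M) (p q r : ℂ) : M :=
  -((θ τ p * θ τ q * θ τ r) • x 0) - (θ2 τ p * θ2 τ q * θ2 τ r) • x 1 +
    (θ3 τ p * θ3 τ q * θ3 τ r) • x 2 - (θ4 τ p * θ4 τ q * θ4 τ r) • x 3

/-- The six quadratic relations satisfied by the images of the functions `z ↦ θⱼ(2z)`. -/
structure ThetaRel (x : Fin 4 → A) : Prop where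
  comm01 : (θ3 τ η * θ4 τ η) • (x 0 * x 1 - x 1 * x 0) +
    (θ τ η * θ2 τ η) • (x 2 * x 3 + x 3 * x 2) = 0
  comm23 : (θ3 τ η * θ4 τ η) • (x 2 * x 3 - x 3 * x 2) -
    (θ τ η * θ2 τ η) • (x 0 * x 1 + x 1 * x 0) = 0
  comm02 : (θ2 τ η * θ4 τ η) • (x 0 * x 2 - x 2 * x 0) +
    (θ τ η * θ3 τ η) • (x 1 * x 3 + x 3 * x 1) = 0
  comm13 : (θ2 τ η * θ4 τ η) • (x 1 * x 3 - x 3 * x 1) -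
    (θ τ η * θ3 τ η) • (x 0 * x 2 + x 2 * x 0) = 0
  comm03 : (θ2 τ η * θ3 τ η) • (x 0 * x 3 - x 3 * x 0) +
    (θ τ η * θ4 τ η) • (x 1 * x 2 + x 2 * x 1) = 0
  comm12 : (θ2 τ η * θ3 τ η) • (x 1 * x 2 - x 2 * x 1) -
    (θ τ η * θ4 τ η) • (x 0 * x 3 + x 3 * x 0) = 0

/-- Twisted commutator `m₁n₂ xy - m₂n₁ yx`. -/
def twistedComm (m₁ n₂ m₂ n₁ : ℂ) (x y : A) : A := (m₁ * n₂) • (x * y) - (m₂ * n₁) • (y * x)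

/-- Sum of twisted commutators for the splitting `(12)(34)`. -/
def pairing12 (x : Fin 4 → A) (s : ℂ) : A :=
  twistedComm (θ τ (s - η)) (θ2 τ (s + η)) (θ2 τ (s - η)) (θ τ (s + η)) (x 0) (x 1) +
    twistedComm (θ3 τ (s - η)) (θ4 τ (s + η)) (θ4 τ (s - η)) (θ3 τ (s + η)) (x 2) (x 3)

/-- Sum of twisted commutators for the splitting `(13)(24)`. -/
def pairing13 (x : Fin 4 → A) (s : ℂ) : A :=
  twistedComm (θ τ (s - η)) (θ3 τ (s + η)) (θ3 τ (s - η)) (θ τ (s + η)) (x 0) (x 2) +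
    twistedComm (θ2 τ (s - η)) (θ4 τ (s + η)) (θ4 τ (s - η)) (θ2 τ (s + η)) (x 1) (x 3)

/-- Sum of twisted commutators for the splitting `(14)(23)`. -/
def pairing14 (x : Fin 4 → A) (s : ℂ) : A :=
  twistedComm (θ τ (s - η)) (θ4 τ (s + η)) (θ4 τ (s - η)) (θ τ (s + η)) (x 0) (x 3) +
    twistedComm (θ2 τ (s - η)) (θ3 τ (s + η)) (θ3 τ (s - η)) (θ2 τ (s + η)) (x 1) (x 2)

/-- The algebraic identity behind the expansion of the relations `F_η`. -/
lemma comb_mul_sub (m₁ m₂ m₃ m₄ n₁ n₂ n₃ n₄ a₁ b₁ a₂ b₂ a b : ℂ) (x₁ x₂ x₃ x₄ : A) :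
    (-((m₁ * (a₁ * b - b₁ * a)) • x₁) - (m₂ * (a₁ * b + b₁ * a)) • x₂ +
        (m₃ * (a₁ * a + b₁ * b)) • x₃ - (m₄ * (a₁ * a - b₁ * b)) • x₄) *
      (-((n₁ * (a₂ * b - b₂ * a)) • x₁) - (n₂ * (a₂ * b + b₂ * a)) • x₂ +
        (n₃ * (a₂ * a + b₂ * b)) • x₃ - (n₄ * (a₂ * a - b₂ * b)) • x₄) -
      (-((m₁ * (a₂ * b - b₂ * a)) • x₁) - (m₂ * (a₂ * b + b₂ * a)) • x₂ +
        (m₃ * (a₂ * a + b₂ * b)) • x₃ - (m₄ * (a₂ * a - b₂ * b)) • x₄) *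
      (-((n₁ * (a₁ * b - b₁ * a)) • x₁) - (n₂ * (a₁ * b + b₁ * a)) • x₂ +
        (n₃ * (a₁ * a + b₁ * b)) • x₃ - (n₄ * (a₁ * a - b₁ * b)) • x₄) =
    (a₁ * b₂ - b₁ * a₂) •
      ((a * b + b * a) • (twistedComm m₁ n₂ m₂ n₁ x₁ x₂ + twistedComm m₃ n₄ m₄ n₃ x₃ x₄) -
        (a * a + b * b) • (twistedComm m₁ n₃ m₃ n₁ x₁ x₃ + twistedComm m₂ n₄ m₄ n₂ x₂ x₄) +
        (a * a - b * b) • (twistedComm m₁ n₄ m₄ n₁ x₁ x₄ + twistedComm m₂ n₃ m₃ n₂ x₂ x₃)) := by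
  simp only [twistedComm, mul_add, add_mul, mul_sub, sub_mul, neg_mul, mul_neg, smul_mul_assoc,
    mul_smul_comm]
  module

/-- Expansion of a twisted pairing in terms of commutators and anticommutators. -/
lemma smul_twistedComm_add {k p r p' r' m₁ m₂ m₃ m₄ n₁ n₂ n₃ n₄ : ℂ} (x₁ x₂ x₃ x₄ : A)
    (h₁ : m₁ * n₂ * k = p * r' - r * p') (h₂ : m₂ * n₁ * k = p * r' + r * p')
    (h₃ : m₃ * n₄ * k = r * r' + p * p') (h₄ : m₄ * n₃ * k = r * r' - p * p') :
    k • (twistedComm m₁ n₂ m₂ n₁ x₁ x₂ + twistedComm m₃ n₄ m₄ n₃ x₃ x₄) =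
      p • (r' • (x₁ * x₂ - x₂ * x₁) + p' • (x₃ * x₄ + x₄ * x₃)) +
        r • (r' • (x₃ * x₄ - x₄ * x₃) - p' • (x₁ * x₂ + x₂ * x₁)) := by
  simp only [twistedComm]
  linear_combination (norm := skip) h₁ • (x₁ * x₂) - h₂ • (x₂ * x₁) +
    h₃ • (x₃ * x₄) - h₄ • (x₄ * x₃)
  module

variable (hτ : 0 < τ.im)
include hτ

lemma thetaComb_mul_sub (x : Fin 4 → A) (s h u₁ u₂ : ℂ) :
    thetaComb τ x (s - η) (u₁ + h) (u₁ - h) * thetaComb τ x (s + η) (u₂ + h) (u₂ - h) -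
      thetaComb τ x (s - η) (u₂ + h) (u₂ - h) * thetaComb τ x (s + η) (u₁ + h) (u₁ - h) =
    (θ τ (u₁ + u₂) * θ τ (u₁ - u₂)) •
      ((θ2 τ (2 * h) * θ2 τ 0) • pairing12 τ η x s - (θ3 τ (2 * h) * θ3 τ 0) • pairing13 τ η x s +
        (θ4 τ (2 * h) * θ4 τ 0) • pairing14 τ η x s) := by
  have e2 := theta2_mul τ hτ h h
  have e3 := theta3_mul τ hτ h h
  have e4 := theta4_mul τ hτ h h
  rw [sub_self, ← two_mul] at e2 e3 e4
  rw [e2, e3, e4, theta_mul τ hτ]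
  simp only [thetaComb, mul_assoc, theta_mul τ hτ, theta2_mul τ hτ, theta3_mul τ hτ,
    theta4_mul τ hτ]
  exact comb_mul_sub _ _ _ _ _ _ _ _ _ _ _ _ _ _ _ _ _ _

lemma smul_pairing12 (x : Fin 4 → A) (s : ℂ) :
    (θ3 τ 0 * θ4 τ 0) • pairing12 τ η x s =
      (θ τ s * θ2 τ s) • ((θ3 τ η * θ4 τ η) • (x 0 * x 1 - x 1 * x 0) +
        (θ τ η * θ2 τ η) • (x 2 * x 3 + x 3 * x 2)) +
      (θ3 τ s * θ4 τ s) • ((θ3 τ η * θ4 τ η) • (x 2 * x 3 - x 3 * x 2) -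
        (θ τ η * θ2 τ η) • (x 0 * x 1 + x 1 * x 0)) := by
  have h1 := theta_add_mul_theta2_sub τ s (-η) hτ
  have h2 := theta_add_mul_theta2_sub τ s η hτ
  have h3 := theta3_add_mul_theta4_sub τ s (-η) hτ
  have h4 := theta3_add_mul_theta4_sub τ s η hτ
  rw [← sub_eq_add_neg, sub_neg_eq_add, theta_neg, theta2_neg, theta3_neg, theta4_neg] at h1 h3
  refine smul_twistedComm_add _ _ _ _ ?_ ?_ ?_ ?_
  · linear_combination h1
  · linear_combination h2
  · linear_combination h3
  · linear_combination h4

lemma smul_pairing13 (x : Fin 4 → A) (s : ℂ) :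
    (θ2 τ 0 * θ4 τ 0) • pairing13 τ η x s =
      (θ τ s * θ3 τ s) • ((θ2 τ η * θ4 τ η) • (x 0 * x 2 - x 2 * x 0) +
        (θ τ η * θ3 τ η) • (x 1 * x 3 + x 3 * x 1)) +
      (θ2 τ s * θ4 τ s) • ((θ2 τ η * θ4 τ η) • (x 1 * x 3 - x 3 * x 1) -
        (θ τ η * θ3 τ η) • (x 0 * x 2 + x 2 * x 0)) := by
  have h1 := theta_add_mul_theta3_sub τ s (-η) hτ
  have h2 := theta_add_mul_theta3_sub τ s η hτ
  have h3 := theta2_add_mul_theta4_sub τ s (-η) hτ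
  have h4 := theta2_add_mul_theta4_sub τ s η hτ
  rw [← sub_eq_add_neg, sub_neg_eq_add, theta_neg, theta2_neg, theta3_neg, theta4_neg] at h1 h3
  refine smul_twistedComm_add _ _ _ _ ?_ ?_ ?_ ?_
  · linear_combination h1
  · linear_combination h2
  · linear_combination h3
  · linear_combination h4

lemma smul_pairing14 (x : Fin 4 → A) (s : ℂ) :
    (θ2 τ 0 * θ3 τ 0) • pairing14 τ η x s =
      (θ τ s * θ4 τ s) • ((θ2 τ η * θ3 τ η) • (x 0 * x 3 - x 3 * x 0) +
        (θ τ η * θ4 τ η) • (x 1 * x 2 + x 2 * x 1)) +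
      (θ2 τ s * θ3 τ s) • ((θ2 τ η * θ3 τ η) • (x 1 * x 2 - x 2 * x 1) -
        (θ τ η * θ4 τ η) • (x 0 * x 3 + x 3 * x 0)) := by
  have h1 := theta_add_mul_theta4_sub τ s (-η) hτ
  have h2 := theta_add_mul_theta4_sub τ s η hτ
  have h3 := theta2_add_mul_theta3_sub τ s (-η) hτ
  have h4 := theta2_add_mul_theta3_sub τ s η hτ
  rw [← sub_eq_add_neg, sub_neg_eq_add, theta_neg, theta2_neg, theta3_neg, theta4_neg] at h1 h3
  refine smul_twistedComm_add _ _ _ _ ?_ ?_ ?_ ?_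
  · linear_combination h1
  · linear_combination h2
  · linear_combination h3
  · linear_combination h4

variable {τ η} in
/-- The relations `F_η` follow from the six quadratic relations. -/
theorem ThetaRel.thetaComb_mul_comm {x : Fin 4 → A} (H : ThetaRel τ η x) (s h u₁ u₂ : ℂ) :
    thetaComb τ x (s - η) (u₁ + h) (u₁ - h) * thetaComb τ x (s + η) (u₂ + h) (u₂ - h) =
      thetaComb τ x (s - η) (u₂ + h) (u₂ - h) * thetaComb τ x (s + η) (u₁ + h) (u₁ - h) := by
  have z2 := theta2_zero_ne_zero τ hτ
  have z3 := theta3_zero_ne_zero τ hτ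
  have z4 := theta4_zero_ne_zero τ hτ
  have h12 := smul_pairing12 τ η hτ x s
  have h13 := smul_pairing13 τ η hτ x s
  have h14 := smul_pairing14 τ η hτ x s
  rw [H.comm01, H.comm23, smul_zero, smul_zero, add_zero,
    smul_eq_zero_iff_right (mul_ne_zero z3 z4)] at h12
  rw [H.comm02, H.comm13, smul_zero, smul_zero, add_zero,
    smul_eq_zero_iff_right (mul_ne_zero z2 z4)] at h13
  rw [H.comm03, H.comm12, smul_zero, smul_zero, add_zero,
    smul_eq_zero_iff_right (mul_ne_zero z2 z3)] at h14
  rw [← sub_eq_zero, thetaComb_mul_sub τ η hτ, h12, h13, h14]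
  simp only [smul_zero, sub_zero, add_zero]

/-- The relations `F_η` imply the six quadratic relations. -/
theorem thetaRel_of_thetaComb_mul_comm {x : Fin 4 → A} (H : ∀ s h u₁ u₂ : ℂ,
    thetaComb τ x (s - η) (u₁ + h) (u₁ - h) * thetaComb τ x (s + η) (u₂ + h) (u₂ - h) =
      thetaComb τ x (s - η) (u₂ + h) (u₂ - h) * thetaComb τ x (s + η) (u₁ + h) (u₁ - h)) :
    ThetaRel τ η x := by
  have z1 := theta_half_ne_zero τ hτ
  have z2 := theta2_zero_ne_zero τ hτ
  have z3 := theta3_zero_ne_zero τ hτ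
  have z4 := theta4_zero_ne_zero τ hτ
  have zE := thE_ne_zero τ 0
  have key : ∀ s, pairing12 τ η x s = 0 ∧ pairing13 τ η x s = 0 ∧ pairing14 τ η x s = 0 := by
    intro s
    obtain ⟨w, hw⟩ := exists_theta_ne_zero τ hτ
    obtain ⟨-, h2, h3, h4⟩ := theta_separation τ hτ (m₁ := (0 : A))
      (m₂ := θ2 τ 0 • pairing12 τ η x s) (m₃ := -(θ3 τ 0 • pairing13 τ η x s))
      (m₄ := θ4 τ 0 • pairing14 τ η x s) (fun v => by
        have h := sub_eq_zero.mpr (H s (v / 2) w 0)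
        rw [thetaComb_mul_sub τ η hτ, add_zero, sub_zero,
          smul_eq_zero_iff_right (mul_ne_zero hw hw), mul_div_cancel₀ v two_ne_zero] at h
        rw [smul_zero, zero_add, ← h]
        module)
    rw [neg_eq_zero] at h3
    exact ⟨(smul_eq_zero_iff_right z2).mp h2, (smul_eq_zero_iff_right z3).mp h3,
      (smul_eq_zero_iff_right z4).mp h4⟩
  have h12 := fun s => (smul_pairing12 τ η hτ x s).symm
  have h13 := fun s => (smul_pairing13 τ η hτ x s).symm
  have h14 := fun s => (smul_pairing14 τ η hτ x s).symm
  simp only [(key _).1, (key _).2.1, (key _).2.2, smul_zero] at h12 h13 h14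
  have a12 := h12 0
  have b12 := h12 (0 + τ / 2)
  have a13 := h13 0
  have b13 := h13 (0 + 1 / 2)
  have a14 := h14 0
  have b14 := h14 (0 + 1 / 2)
  rw [theta_zero, zero_mul, zero_smul, zero_add] at a12 a13 a14
  rw [theta_add_half_period, theta2_add_half_period, theta4_add_half_period, theta_zero, mul_zero,
    mul_zero, zero_smul, add_zero] at b12
  rw [theta2_add_half, theta3_add_half, theta_zero, neg_zero, zero_mul, zero_smul, add_zero,
    zero_add] at b13
  rw [theta2_add_half, theta4_add_half, theta_zero, neg_zero, zero_mul, zero_smul, add_zero,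
    zero_add] at b14
  exact {
    comm01 := (smul_eq_zero_iff_right (mul_ne_zero (mul_ne_zero (mul_ne_zero I_ne_zero zE) z4)
      (mul_ne_zero zE z3))).mp b12
    comm23 := (smul_eq_zero_iff_right (mul_ne_zero z3 z4)).mp a12
    comm02 := (smul_eq_zero_iff_right (mul_ne_zero z1 z4)).mp b13
    comm13 := (smul_eq_zero_iff_right (mul_ne_zero z2 z4)).mp a13
    comm03 := (smul_eq_zero_iff_right (mul_ne_zero z1 z3)).mp b14
    comm12 := (smul_eq_zero_iff_right (mul_ne_zero z2 z3)).mp a14 }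

end Relations

section Basis

variable (τ : ℂ)

/-- The functions `z ↦ θⱼ(2z)`, which form a basis of `V`. -/
def doubledTheta : Fin 4 → ℂ → ℂ :=
  ![fun z => θ τ (2 * z), fun z => θ2 τ (2 * z), fun z => θ3 τ (2 * z), fun z => θ4 τ (2 * z)]

variable (hτ : 0 < τ.im)
include hτ

lemma fV_eq_thetaComb (α β γ : ℂ) :
    fV τ α β γ = (1 / 2 : ℂ) • thetaComb τ (doubledTheta τ) (α + β) (α + γ) (β + γ) := by
  funext z
  have h := two_mul_fV τ hτ α β γ z
  simp only [thetaComb, doubledTheta, Pi.smul_apply, Pi.add_apply, Pi.sub_apply, Pi.neg_apply,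
    smul_eq_mul, Matrix.cons_val]
  linear_combination h / 2

lemma thetaComb_doubledTheta_mem (p q r : ℂ) : thetaComb τ (doubledTheta τ) p q r ∈ Vsub τ := by
  have h := (Vsub τ).smul_mem 2 (fVmem τ ((p + q - r) / 2) ((p + r - q) / 2) ((q + r - p) / 2))
  rw [fV_eq_thetaComb τ hτ, smul_smul, show (2 : ℂ) * (1 / 2) = 1 by norm_num, one_smul,
    show (p + q - r) / 2 + (p + r - q) / 2 = p by ring,
    show (p + q - r) / 2 + (q + r - p) / 2 = q by ring,
    show (p + r - q) / 2 + (q + r - p) / 2 = r by ring] at h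
  exact h

lemma doubledTheta_mem (j : Fin 4) : doubledTheta τ j ∈ Vsub τ := by
  have z1 := theta_half_ne_zero τ hτ
  have z1' := theta_half_period_ne_zero τ hτ
  have z2 := theta2_zero_ne_zero τ hτ
  have z3 := theta3_zero_ne_zero τ hτ
  have z4 := theta4_zero_ne_zero τ hτ
  have zE := thE_ne_zero τ 0
  have t20 : θ2 τ (1 / 2) = 0 := by
    rw [← zero_add (1 / 2 : ℂ), theta2_add_half, theta_zero, neg_zero]
  have t40 : θ4 τ (τ / 2) = 0 := by
    rw [← zero_add (τ / 2), theta4_add_half_period, theta_zero, mul_zero]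
  have t30 : θ3 τ (τ / 2 + 1 / 2) = 0 := by rw [theta3_add_half, t40]
  have t21 : θ2 τ (τ / 2) = thE τ 0 * θ3 τ 0 := by
    rw [← theta2_add_half_period, zero_add]
  have t31 : θ3 τ (τ / 2) = thE τ 0 * θ2 τ 0 := by
    rw [← theta3_add_half_period, zero_add]
  have mem : ∀ {c : ℂ} {g : ℂ → ℂ}, c ≠ 0 → ∀ p q r,
      thetaComb τ (doubledTheta τ) p q r = c • g → g ∈ Vsub τ := by
    intro c g hc p q r e
    have := thetaComb_doubledTheta_mem τ hτ p q r
    rw [e] at this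
    exact (Submodule.smul_mem_iff _ hc).mp this
  fin_cases j
  · refine mem (c := -(θ τ (1 / 2) * θ τ (τ / 2 + 1 / 2) * θ τ (τ / 2))) ?_
      (1 / 2) (τ / 2 + 1 / 2) (τ / 2) ?_
    · rw [theta_add_half, t21]
      exact neg_ne_zero.mpr (mul_ne_zero (mul_ne_zero z1 (mul_ne_zero zE z3)) z1')
    · simp only [thetaComb, t20, t30, t40]
      simp
  · refine mem (c := -(θ2 τ 0 * θ2 τ (τ / 2 + 1 / 2) * θ2 τ (τ / 2))) ?_
      0 (τ / 2 + 1 / 2) (τ / 2) ?_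
    · rw [theta2_add_half, t21]
      exact neg_ne_zero.mpr (mul_ne_zero (mul_ne_zero z2 (neg_ne_zero.mpr z1')) (mul_ne_zero zE z3))
    · simp only [thetaComb, theta_zero, t30, t40]
      simp
  · refine mem (c := θ3 τ 0 * θ3 τ (1 / 2) * θ3 τ (τ / 2)) ?_ 0 (1 / 2) (τ / 2) ?_
    · rw [← zero_add (1 / 2 : ℂ), theta3_add_half, t31]
      exact mul_ne_zero (mul_ne_zero z3 z4) (mul_ne_zero zE z2)
    · simp only [thetaComb, theta_zero, t20, t40]
      simp
  · refine mem (c := -(θ4 τ 0 * θ4 τ (1 / 2) * θ4 τ (τ / 2 + 1 / 2))) ?_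
      0 (1 / 2) (τ / 2 + 1 / 2) ?_
    · rw [theta4_add_half, ← zero_add (1 / 2 : ℂ), theta4_add_half, t31]
      exact neg_ne_zero.mpr (mul_ne_zero (mul_ne_zero z4 z3) (mul_ne_zero zE z2))
    · simp only [thetaComb, theta_zero, t20, t30]
      simp

/-- The function `z ↦ θⱼ(2z)` as an element of `V`. -/
def thetaVec (j : Fin 4) : Vsub τ := ⟨doubledTheta τ j, doubledTheta_mem τ hτ j⟩

lemma elemV_eq_thetaComb (α β γ : ℂ) :
    elemV τ α β γ = (1 / 2 : ℂ) • thetaComb τ (thetaVec τ hτ) (α + β) (α + γ) (β + γ) :=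
  Subtype.ext (fV_eq_thetaComb τ hτ α β γ)

lemma linearIndependent_thetaVec : LinearIndependent ℂ (thetaVec τ hτ) := by
  rw [Fintype.linearIndependent_iff]
  intro g hg
  have hg' : ∀ z, ∑ j, g j * doubledTheta τ j z = 0 := by
    intro z
    have := congrFun (congrArg Subtype.val hg) z
    simpa [thetaVec] using this
  obtain ⟨h0, h1, h2, h3⟩ := theta_separation τ hτ (m₁ := g 0) (m₂ := g 1) (m₃ := g 2)
    (m₄ := g 3) (fun w => by
      have h := hg' (w / 2)
      simp only [Fin.sum_univ_four, doubledTheta, Matrix.cons_val,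
        mul_div_cancel₀ w (two_ne_zero' ℂ)] at h
      simp only [smul_eq_mul]
      linear_combination h)
  intro j
  fin_cases j
  exacts [h0, h1, h2, h3]

lemma span_thetaVec : ⊤ ≤ Submodule.span ℂ (Set.range (thetaVec τ hτ)) := by
  rintro ⟨x, hx⟩ -
  induction hx using Submodule.span_induction with
  | mem x h =>
    obtain ⟨c, a, ha, rfl⟩ := h
    have e : (⟨fun z => c * ∏ i, θ τ (z + a i), Submodule.subset_span ⟨c, a, ha, rfl⟩⟩ : Vsub τ) =
        c • elemV τ (a 0) (a 1) (a 2) := by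
      apply Subtype.ext
      funext z
      rw [Fin.sum_univ_four] at ha
      simp only [elemV, fV, Fin.prod_univ_four, Submodule.coe_smul, Pi.smul_apply, smul_eq_mul]
      rw [show z - a 0 - a 1 - a 2 = z + a 3 by linear_combination -ha]
    rw [e, elemV_eq_thetaComb τ hτ]
    have hj : ∀ j, thetaVec τ hτ j ∈ Submodule.span ℂ (Set.range (thetaVec τ hτ)) :=
      fun j => Submodule.subset_span ⟨j, rfl⟩
    unfold thetaComb
    refine Submodule.smul_mem _ _ (Submodule.smul_mem _ _ (sub_mem (add_mem (sub_mem (neg_mem ?_)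
      ?_) ?_) ?_)) <;> exact Submodule.smul_mem _ _ (hj _)
  | zero => exact zero_mem _
  | add x y hx hy h1 h2 => exact add_mem h1 h2
  | smul c x hx h => exact Submodule.smul_mem _ c h

/-- The basis of `V` formed by the functions `z ↦ θⱼ(2z)`. -/
def thetaBasis : Module.Basis (Fin 4) ℂ (Vsub τ) :=
  Module.Basis.mk (linearIndependent_thetaVec τ hτ) (span_thetaVec τ hτ)

lemma thetaBasis_apply (j : Fin 4) : thetaBasis τ hτ j = thetaVec τ hτ j :=
  Module.Basis.mk_apply _ _ j

lemma map_elemV {M : Type*} [AddCommGroup M] [Module ℂ M] (φ : Vsub τ →ₗ[ℂ] M) (α β γ : ℂ) :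
    φ (elemV τ α β γ) =
      (1 / 2 : ℂ) • thetaComb τ (fun j => φ (thetaVec τ hτ j)) (α + β) (α + γ) (β + γ) := by
  rw [elemV_eq_thetaComb τ hτ, map_smul]
  simp only [thetaComb, map_sub, map_add, map_neg, map_smul]

/-- The relations `F_η` in terms of the basis `z ↦ θⱼ(2z)`. -/
lemma map_elemV_mul_sub {A : Type*} [Ring A] [Algebra ℂ A] (φ : Vsub τ →ₗ[ℂ] A)
    (η a b c₁ c₂ : ℂ) :
    φ (elemV τ (a - η / 2) (b - η / 2) (c₁ + η / 2)) *
        φ (elemV τ (a + η / 2) (b + η / 2) (c₂ - η / 2)) -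
      φ (elemV τ (a - η / 2) (b - η / 2) (c₂ + η / 2)) *
        φ (elemV τ (a + η / 2) (b + η / 2) (c₁ - η / 2)) =
    (1 / 4 : ℂ) •
      (thetaComb τ (fun j => φ (thetaVec τ hτ j)) (a + b - η) (a + c₁) (b + c₁) *
          thetaComb τ (fun j => φ (thetaVec τ hτ j)) (a + b + η) (a + c₂) (b + c₂) -
        thetaComb τ (fun j => φ (thetaVec τ hτ j)) (a + b - η) (a + c₂) (b + c₂) *
          thetaComb τ (fun j => φ (thetaVec τ hτ j)) (a + b + η) (a + c₁) (b + c₁)) := by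
  simp only [map_elemV τ hτ, smul_mul_smul_comm, smul_sub]
  ring_nf

end Basis

section Iso

variable (τ η : ℂ)

/-- The scalars relating the generators `Sⱼ` to the functions `z ↦ θⱼ(2z)`. -/
def sklScalar : Fin 4 → ℂ := ![θ τ η, θ2 τ η, I * θ3 τ η, θ4 τ η]

variable {τ η} in
lemma sklScalar_ne_zero (hτ : 0 < τ.im) (hη : ¬ ∃ m n : ℤ, 2 * η = (m : ℂ) + τ * n) (j : Fin 4) :
    sklScalar τ η j ≠ 0 := by
  obtain ⟨h1, h2, h3, h4⟩ := theta_ne_zero_of_two_mul hτ hη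
  fin_cases j
  exacts [h1, h2, mul_ne_zero I_ne_zero h3, h4]

/-- Up to rescaling the generators, the relations of the Sklyanin algebra are those satisfied by the
functions `z ↦ θⱼ(2z)`. -/
theorem thetaRel_iff {A : Type*} [Ring A] [Algebra ℂ A] (hτ : 0 < τ.im)
    (hη : ¬ ∃ m n : ℤ, 2 * η = (m : ℂ) + τ * n) (x : Fin 4 → A) :
    ThetaRel τ η x ↔ ∀ a b, sklRel τ η a b →
      FreeAlgebra.lift ℂ (fun j => sklScalar τ η j • x j) a =
        FreeAlgebra.lift ℂ (fun j => sklScalar τ η j • x j) b := by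
  obtain ⟨z1, z2, z3, z4⟩ := theta_ne_zero_of_two_mul hτ hη
  set L := FreeAlgebra.lift ℂ (fun j => sklScalar τ η j • x j) with hL
  have hX : ∀ j, L (X j) = sklScalar τ η j • x j := fun j => FreeAlgebra.lift_ι_apply _ _
  have e0 : sklScalar τ η 0 = θ τ η := rfl
  have e1 : sklScalar τ η 1 = θ2 τ η := rfl
  have e2 : sklScalar τ η 2 = I * θ3 τ η := rfl
  have e3 : sklScalar τ η 3 = θ4 τ η := rfl
  have i1 : L (X 0 * X 1 - X 1 * X 0) - L ((I * J23 τ η) • (X 2 * X 3 + X 3 * X 2)) =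
      (θ τ η * θ2 τ η / (θ3 τ η * θ4 τ η)) • ((θ3 τ η * θ4 τ η) • (x 0 * x 1 - x 1 * x 0) +
    (θ τ η * θ2 τ η) • (x 2 * x 3 + x 3 * x 2)) := by
    simp only [map_sub, map_add, map_mul, map_smul, hX, e0, e1, e2, e3, J23, smul_mul_smul_comm]
    match_scalars <;> field_simp <;> simp only [I_sq] <;> ring
  have i2 : L (X 0 * X 2 - X 2 * X 0) - L ((I * J31 τ η) • (X 3 * X 1 + X 1 * X 3)) =
      (I * (θ τ η * θ3 τ η) / (θ2 τ η * θ4 τ η)) • ((θ2 τ η * θ4 τ η) • (x 0 * x 2 - x 2 * x 0) +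
    (θ τ η * θ3 τ η) • (x 1 * x 3 + x 3 * x 1)) := by
    simp only [map_sub, map_add, map_mul, map_smul, hX, e0, e1, e2, e3, J31, smul_mul_smul_comm]
    match_scalars <;> field_simp
  have i3 : L (X 0 * X 3 - X 3 * X 0) - L ((I * J12 τ η) • (X 1 * X 2 + X 2 * X 1)) =
      (θ τ η * θ4 τ η / (θ2 τ η * θ3 τ η)) • ((θ2 τ η * θ3 τ η) • (x 0 * x 3 - x 3 * x 0) +
    (θ τ η * θ4 τ η) • (x 1 * x 2 + x 2 * x 1)) := by
    simp only [map_sub, map_add, map_mul, map_smul, hX, e0, e1, e2, e3, J12, smul_mul_smul_comm]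
    match_scalars <;> field_simp <;> simp only [I_sq] <;> ring
  have i4 : L (X 1 * X 2 - X 2 * X 1) - L ((I : ℂ) • (X 0 * X 3 + X 3 * X 0)) =
      I • ((θ2 τ η * θ3 τ η) • (x 1 * x 2 - x 2 * x 1) -
    (θ τ η * θ4 τ η) • (x 0 * x 3 + x 3 * x 0)) := by
    simp only [map_sub, map_add, map_mul, map_smul, hX, e0, e1, e2, e3, smul_mul_smul_comm]
    module
  have i5 : L (X 2 * X 3 - X 3 * X 2) - L ((I : ℂ) • (X 0 * X 1 + X 1 * X 0)) =
      I • ((θ3 τ η * θ4 τ η) • (x 2 * x 3 - x 3 * x 2) -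
    (θ τ η * θ2 τ η) • (x 0 * x 1 + x 1 * x 0)) := by
    simp only [map_sub, map_add, map_mul, map_smul, hX, e0, e1, e2, e3, smul_mul_smul_comm]
    module
  have i6 : L (X 3 * X 1 - X 1 * X 3) - L ((I : ℂ) • (X 0 * X 2 + X 2 * X 0)) =
      (-1 : ℂ) • ((θ2 τ η * θ4 τ η) • (x 1 * x 3 - x 3 * x 1) -
    (θ τ η * θ3 τ η) • (x 0 * x 2 + x 2 * x 0)) := by
    simp only [map_sub, map_add, map_mul, map_smul, hX, e0, e1, e2, e3, smul_mul_smul_comm]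
    match_scalars <;> ring_nf <;> simp only [I_sq] <;> ring
  constructor
  · rintro H a b (⟨rfl, rfl⟩ | ⟨rfl, rfl⟩ | ⟨rfl, rfl⟩ | ⟨rfl, rfl⟩ | ⟨rfl, rfl⟩ | ⟨rfl, rfl⟩) <;>
      rw [← sub_eq_zero]
    · rw [i1, H.comm01, smul_zero]
    · rw [i2, H.comm02, smul_zero]
    · rw [i3, H.comm03, smul_zero]
    · rw [i4, H.comm12, smul_zero]
    · rw [i5, H.comm23, smul_zero]
    · rw [i6, H.comm13, smul_zero]
  · intro H
    have h1 := H _ _ (Or.inl ⟨rfl, rfl⟩)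
    have h2 := H _ _ (Or.inr (Or.inl ⟨rfl, rfl⟩))
    have h3 := H _ _ (Or.inr (Or.inr (Or.inl ⟨rfl, rfl⟩)))
    have h4 := H _ _ (Or.inr (Or.inr (Or.inr (Or.inl ⟨rfl, rfl⟩))))
    have h5 := H _ _ (Or.inr (Or.inr (Or.inr (Or.inr (Or.inl ⟨rfl, rfl⟩)))))
    have h6 := H _ _ (Or.inr (Or.inr (Or.inr (Or.inr (Or.inr ⟨rfl, rfl⟩)))))
    rw [← sub_eq_zero, i1, smul_eq_zero_iff_right (by positivity)] at h1
    rw [← sub_eq_zero, i2, smul_eq_zero_iff_right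
      (div_ne_zero (mul_ne_zero I_ne_zero (by positivity)) (by positivity))] at h2
    rw [← sub_eq_zero, i3, smul_eq_zero_iff_right (by positivity)] at h3
    rw [← sub_eq_zero, i4, smul_eq_zero_iff_right I_ne_zero] at h4
    rw [← sub_eq_zero, i5, smul_eq_zero_iff_right I_ne_zero] at h5
    rw [← sub_eq_zero, i6, smul_eq_zero_iff_right (neg_ne_zero.mpr one_ne_zero)] at h6
    exact ⟨h1, h5, h2, h6, h3, h4⟩

variable (hτ : 0 < τ.im)
include hτ

/-- A linear map from `V` kills the relations `F_η` if and only if the images of the functions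
`z ↦ θⱼ(2z)` satisfy the six quadratic relations. -/
theorem lift_qRel_iff {A : Type*} [Ring A] [Algebra ℂ A] (φ : Vsub τ →ₗ[ℂ] A) :
    (∀ a b, qRel τ η a b → TensorAlgebra.lift ℂ φ a = TensorAlgebra.lift ℂ φ b) ↔
      ThetaRel τ η fun j => φ (thetaVec τ hτ j) := by
  constructor
  · intro H
    refine thetaRel_of_thetaComb_mul_comm τ η hτ fun s h u₁ u₂ => ?_
    have h1 := H _ _ ⟨s / 2 + h, s / 2 - h, u₁ - s / 2, u₂ - s / 2, rfl, rfl⟩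
    simp only [map_sub, map_mul, TensorAlgebra.lift_ι_apply, map_zero] at h1
    rw [map_elemV_mul_sub τ hτ, smul_eq_zero_iff_right (by norm_num), sub_eq_zero,
      show s / 2 + h + (s / 2 - h) = s by ring, show s / 2 + h + (u₁ - s / 2) = u₁ + h by ring,
      show s / 2 - h + (u₁ - s / 2) = u₁ - h by ring,
      show s / 2 + h + (u₂ - s / 2) = u₂ + h by ring,
      show s / 2 - h + (u₂ - s / 2) = u₂ - h by ring] at h1
    exact h1
  · rintro H _ _ ⟨a, b, c₁, c₂, rfl, rfl⟩
    simp only [map_sub, map_mul, TensorAlgebra.lift_ι_apply, map_zero]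
    have h1 := H.thetaComb_mul_comm hτ (a + b) ((a - b) / 2) ((a + b) / 2 + c₁) ((a + b) / 2 + c₂)
    rw [show (a + b) / 2 + c₁ + (a - b) / 2 = a + c₁ by ring,
      show (a + b) / 2 + c₁ - (a - b) / 2 = b + c₁ by ring,
      show (a + b) / 2 + c₂ + (a - b) / 2 = a + c₂ by ring,
      show (a + b) / 2 + c₂ - (a - b) / 2 = b + c₂ by ring] at h1
    rw [map_elemV_mul_sub τ hτ, h1, sub_self, smul_zero]

theorem nonempty_ringQuot_equiv (hη : ¬ ∃ m n : ℤ, 2 * η = (m : ℂ) + τ * n) :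
    Nonempty (RingQuot (sklRel τ η) ≃ₐ[ℂ] RingQuot (qRel τ η)) := by
  have hc := sklScalar_ne_zero hτ hη
  let q := RingQuot.mkAlgHom ℂ (qRel τ η)
  let p := RingQuot.mkAlgHom ℂ (sklRel τ η)
  let φ : Vsub τ →ₗ[ℂ] RingQuot (qRel τ η) := q.toLinearMap ∘ₗ TensorAlgebra.ι ℂ
  let ψ : Vsub τ →ₗ[ℂ] RingQuot (sklRel τ η) :=
    (thetaBasis τ hτ).constr ℂ fun j => (sklScalar τ η j)⁻¹ • p (X j)
  have hψ : ∀ j, ψ (thetaVec τ hτ j) = (sklScalar τ η j)⁻¹ • p (X j) := fun j => by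
    rw [← thetaBasis_apply, Module.Basis.constr_basis]
  have hp : FreeAlgebra.lift ℂ (fun j => sklScalar τ η j • ψ (thetaVec τ hτ j)) = p := by
    refine FreeAlgebra.hom_ext (funext fun j => ?_)
    simp only [Function.comp_apply, FreeAlgebra.lift_ι_apply, hψ]
    rw [smul_inv_smul₀ (hc j)]
    rfl
  have hq : TensorAlgebra.lift ℂ φ = q := by
    refine TensorAlgebra.hom_ext (LinearMap.ext fun v => ?_)
    simp [φ]
  let F : RingQuot (sklRel τ η) →ₐ[ℂ] RingQuot (qRel τ η) := RingQuot.liftAlgHom ℂ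
    ⟨FreeAlgebra.lift ℂ fun j => sklScalar τ η j • φ (thetaVec τ hτ j),
      (thetaRel_iff τ η hτ hη _).mp ((lift_qRel_iff τ η hτ φ).mp fun a b h => by
        rw [hq]
        exact RingQuot.mkAlgHom_rel ℂ h)⟩
  let G : RingQuot (qRel τ η) →ₐ[ℂ] RingQuot (sklRel τ η) := RingQuot.liftAlgHom ℂ
    ⟨TensorAlgebra.lift ℂ ψ, (lift_qRel_iff τ η hτ ψ).mpr ((thetaRel_iff τ η hτ hη _).mpr
      fun a b h => by
        rw [hp]
        exact RingQuot.mkAlgHom_rel ℂ h)⟩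
  have hF : ∀ j, F (p (X j)) = sklScalar τ η j • q (TensorAlgebra.ι ℂ (thetaVec τ hτ j)) :=
    fun j => by
      simp only [F, p, RingQuot.liftAlgHom_mkAlgHom_apply]
      exact FreeAlgebra.lift_ι_apply _ _
  have hG : ∀ v, G (q (TensorAlgebra.ι ℂ v)) = ψ v := fun v => by
    simp only [G, q, RingQuot.liftAlgHom_mkAlgHom_apply, TensorAlgebra.lift_ι_apply]
  refine ⟨AlgEquiv.ofAlgHom F G ?_ ?_⟩
  · refine RingQuot.ringQuot_ext' ℂ _ _ (TensorAlgebra.hom_ext ((thetaBasis τ hτ).ext fun j => ?_))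
    rw [thetaBasis_apply]
    change F (G (q (TensorAlgebra.ι ℂ _))) = q (TensorAlgebra.ι ℂ _)
    rw [hG, hψ, map_smul, hF, inv_smul_smul₀ (hc j)]
  · refine RingQuot.ringQuot_ext' ℂ _ _ (FreeAlgebra.hom_ext (funext fun j => ?_))
    change G (F (p (X j))) = p (X j)
    rw [hF, map_smul, hG, hψ, smul_inv_smul₀ (hc j)]

end Iso

/-- Theorem B.4: for `2η ∉ Λ` the Sklyanin algebra `𝒮_η` and the
quotient algebra `Q_η = T(V)/[R_η]` are isomorphic as unital `ℂ`-algebras. -/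
theorem statement19 (τ : ℂ) (hτ : 0 < τ.im) (η : ℂ)
    (hη : ¬ ∃ m n : ℤ, 2 * η = (m : ℂ) + τ * n) :
    Nonempty (Sklyanin τ η ≃ₐ[ℂ] Qeta τ η) :=
  nonempty_ringQuot_equiv τ η hτ hη
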